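/- For every b > 0 there exists a constant c_b > 0 such that for all n ≥ 1, every non-empty A ⊆ G_n with |A| ≤ b·ln(N_n) and every good vertex x ∈ G_A at the boundary of A, one has | E_x^{G_n}[H_A] / E_π^{G_n}[H_A] − P_x^{G_n}[ H_A > T_{F_A(x,s_n)} ] | ≤ c_b·(ln(N_n))^{−3}, where E_π^{G_n} is the expectation for simple random walk on G_n started from the uniform distribution on the vertices of G_n. -/

import Mathlib

open MeasureTheory ProbabilityTheory Filter Set
open scoped ENNReal NNReal ENat Classical

namespace GFF

variable {V : Type*} {T : Type*}

/-- Number of ordered adjacent pairs inside `U` (twice the number of edges of the induced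
subgraph). -/
noncomputable def adjPairs (G : SimpleGraph V) (U : Set V) : ℕ :=
  Set.ncard {p : V × V | p.1 ∈ U ∧ p.2 ∈ U ∧ G.Adj p.1 p.2}

/-- `U` (assumed connected) induces a tree, i.e. has tree excess zero. -/
def TxZero (G : SimpleGraph V) (U : Set V) : Prop :=
  adjPairs G U = 2 * (Set.ncard U - 1)

/-- Closed ball of radius `R` for the graph distance. -/
def gball (G : SimpleGraph V) (x : V) (R : ℕ) : Set V := {y | G.dist x y ≤ R}

/-- Set of vertices within distance `R` of the set `A`. -/
def sball (G : SimpleGraph V) (A : Set V) (R : ℕ) : Set V := {y | ∃ a ∈ A, G.dist a y ≤ R}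

/-- Connected component containing `x` of the level set `{ω ≥ h}`. -/
def levelComp (G : SimpleGraph V) (h : ℝ) (ω : V → ℝ) (x : V) : Set V :=
  {y | ∃ p : G.Walk x y, ∀ v ∈ p.support, h ≤ ω v}

/-- `G` is `d`-regular. -/
def IsReg (G : SimpleGraph V) (d : ℕ) : Prop := ∀ v, Nat.card (G.neighborSet v) = d

/-- `G` is an infinite `d`-regular tree. -/
def IsRegTree (G : SimpleGraph V) (d : ℕ) : Prop :=
  G.Connected ∧ G.IsAcyclic ∧ IsReg G d

/-- Transition matrix of SRW on a `d`-regular graph. -/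
noncomputable def transP [Fintype V] (G : SimpleGraph V) (d : ℕ) : Matrix V V ℝ :=
  Matrix.of fun u v => if G.Adj u v then ((d : ℝ))⁻¹ else 0

/-- All non-zero eigenvalues of `I - P` are at least `β`. -/
def SpectralGapLB [Fintype V] (G : SimpleGraph V) (d : ℕ) (β : ℝ) : Prop :=
  ∀ (f : V → ℝ) (lam : ℝ),
    Matrix.mulVec ((1 : Matrix V V ℝ) - transP G d) f = lam • f → f ≠ 0 → lam = 0 ∨ β ≤ lam

/-- `P_x[X̄_t = y]` for the continuous-time SRW with i.i.d. mean-one exponential holding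
times (Poissonized jump chain). -/
noncomputable def heatK [Fintype V] (G : SimpleGraph V) (d : ℕ) (t : ℝ) (x y : V) : ℝ :=
  ∑' k : ℕ, Real.exp (-t) * t ^ k / (Nat.factorial k) * ((transP G d) ^ k) x y

/-- The zero-average Green function. -/
noncomputable def zGreen [Fintype V] (G : SimpleGraph V) (d Nn : ℕ) (x y : V) : ℝ :=
  ∫ t in Set.Ioi (0 : ℝ), (heatK G d t x y - 1 / (Nn : ℝ))

/-- Green function of SRW on the `d`-regular tree. -/
noncomputable def treeGreen (G : SimpleGraph V) (d : ℕ) (x y : V) : ℝ :=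
  (((d : ℝ) - 1) / ((d : ℝ) - 2)) * (((d : ℝ) - 1)⁻¹) ^ (G.dist x y)

/-- `μ` is the law of the centred Gaussian field with covariance `K`. -/
def IsGaussianField {I : Type*} (μ : Measure (I → ℝ)) (K : I → I → ℝ) : Prop :=
  IsProbabilityMeasure μ ∧
    ∀ c : I →₀ ℝ,
      μ.map (fun ω => ∑ i ∈ c.support, c i * ω i) =
        gaussianReal 0 (Real.toNNReal (∑ i ∈ c.support, ∑ j ∈ c.support, c i * c j * K i j))

/-- One-step transition probability of SRW. -/
noncomputable def srwStep (G : SimpleGraph V) (d : ℕ) (u v : V) : ℝ≥0∞ :=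
  if G.Adj u v then (d : ℝ≥0∞)⁻¹ else 0

/-- `W x` is the law of discrete-time SRW on `G` started at `x`. -/
def IsSRW [MeasurableSpace V] (G : SimpleGraph V) (d : ℕ) (W : V → Measure (ℕ → V)) : Prop :=
  (∀ x, IsProbabilityMeasure (W x)) ∧
    ∀ (x : V) (k : ℕ) (p : ℕ → V),
      W x {ω | ∀ i ≤ k, ω i = p i} =
        (if p 0 = x then 1 else 0) * ∏ i ∈ Finset.range k, srwStep G d (p i) (p (i + 1))

/-- Entrance time of the set `A` (`⊤` if never entered). -/
noncomputable def hitTime (A : Set V) (ω : ℕ → V) : ℕ∞ :=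
  sInf ((Nat.cast : ℕ → ℕ∞) '' {k | ω k ∈ A})

/-- Exit time of the set `U`. -/
noncomputable def exitTime (U : Set V) (ω : ℕ → V) : ℕ∞ := hitTime Uᶜ ω

/-- Position of the walk at the entrance time of `A`. -/
noncomputable def stopAt (A : Set V) (ω : ℕ → V) : V := ω (hitTime A ω).toNat

/-- `π` is a cover tree of `G` at `x`. -/
def IsCoverMap (Gt : SimpleGraph T) (G : SimpleGraph V) (o : T) (x : V) (π : T → V) : Prop :=
  π o = x ∧ Function.Surjective π ∧ ∀ y : T, π '' (Gt.neighborSet y) = G.neighborSet (π y)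

/-- `T_d^+`: the vertices of the tree whose geodesic to `o` avoids the fixed neighbour
`obar` of `o`. -/
def treePlus (Gt : SimpleGraph T) (o obar : T) : Set T :=
  {z | Gt.dist z obar = Gt.dist z o + 1}

/-- `S^+_{T_d}(o,R)`. -/
def spherePlus (Gt : SimpleGraph T) (o obar : T) (R : ℕ) : Set T :=
  {z | z ∈ treePlus Gt o obar ∧ Gt.dist o z = R}

/-- The critical value for level-set percolation on the tree (w.r.t. the law `μT`). -/
noncomputable def hstar (Gt : SimpleGraph T) (o : T) (μT : Measure (T → ℝ)) : ℝ :=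
  sInf {h : ℝ | μT {ω | (levelComp Gt h ω o).Infinite} = 0}

/-- The forward percolation probability `η⁺(h)`. -/
noncomputable def etaPlus (Gt : SimpleGraph T) (o obar : T) (μT : Measure (T → ℝ)) (h : ℝ) :
    ℝ :=
  (μT {ω | (levelComp Gt h ω o ∩ treePlus Gt o obar).Infinite}).toReal

/-- `s_n`. -/
noncomputable def sn (d Nn : ℕ) : ℕ :=
  max 1 ⌊(8 : ℝ) * Real.logb ((d : ℝ) - 1) (Real.logb ((d : ℝ) - 1) (Nn : ℝ))⌋₊

/-- `c₀ = αβ/(d-1)`. -/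
noncomputable def c0 (d : ℕ) (α β : ℝ) : ℝ := α * β / ((d : ℝ) - 1)

/-- `r_n`. -/
noncomputable def rn (d : ℕ) (α β : ℝ) (Nn : ℕ) : ℕ :=
  max 1 ⌊(c0 d α β / 18) * Real.logb ((d : ℝ) - 1) (Nn : ℝ)⌋₊

/-- `R_n`. -/
noncomputable def Rn (d : ℕ) (α β : ℝ) (Nn : ℕ) : ℕ :=
  max 1 ⌊(c0 d α β / 6) * Real.logb ((d : ℝ) - 1) (Nn : ℝ)⌋₊

/-- `F_A(x,s)`: the vertices of `B(A,s) ∖ A` connected to `x` within `B(A,s) ∖ A`. -/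
def Fset (G : SimpleGraph V) (A : Set V) (s : ℕ) (x : V) : Set V :=
  {z | ∃ p : G.Walk x z, ∀ v ∈ p.support, v ∈ sball G A s ∧ v ∉ A}

/-- Good vertex at the boundary of `A`. -/
def GoodVertex (G : SimpleGraph V) (A : Set V) (s : ℕ) (x : V) : Prop :=
  x ∉ A ∧ (∃! y, y ∈ A ∧ G.Adj x y) ∧
    TxZero G (Fset G A s x) ∧
    ∀ y : V, y ∉ A → (∃ a ∈ A, G.Adj y a) → y ≠ x →
      ∀ p : G.Walk y x, (∀ v ∈ p.support, v ∉ A) → ∃ v ∈ p.support, v ∉ sball G A s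

end GFF

/-!
Let `h` be the expected hitting time of `A` as a function of the starting point, so that
`h = 1 + P h` off `A`; on `A` the defect in this equation is the mean return time, whose total mass
is the number `N` of vertices (Kac).

Around each `a ∈ A` a ball of radius of order `log N` contains at most one cycle, hence carries a
radial barrier that resembles the Green function of the tree and is small at distance `s` from `a`.
Superposed with the mean return times as weights, the barriers compensate the defect of `h`, so `h`
changes little under of order `log N` lazy steps at vertices at distance more than `s` from `A`.
As the chain has mixed by then, `h` is close to its mean `𝔼 h` there.

The vertices outside `A` that are adjacent to `F = F_A(x, s)` are at distance more than `s` from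
`A`.  With `p` the probability of leaving `F` before hitting `A`, the function `h - 𝔼 h * p` thus
has Laplacian one on `F` and is small on its boundary.  Since `F` is a tree, it has at most
`3 N / 4` vertices, and the spectral gap bounds `h - 𝔼 h * p` on `F` by `O(√N)` plus the boundary
error.  This is divided by `𝔼 h ≥ N / (4 |A|)`.
-/

open Matrix
open scoped BigOperators

namespace GFF

section RowStochastic

variable {V : Type*} [Fintype V] {P : Matrix V V ℝ}

lemma mulVec_const (hP : P ∈ rowStochastic ℝ V) (c : ℝ) : (P *ᵥ fun _ ↦ c) = fun _ ↦ c := by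
  funext z
  simp only [mulVec, dotProduct, ← Finset.sum_mul, sum_row_of_mem_rowStochastic hP, one_mul]

lemma mulVec_sub_const (hP : P ∈ rowStochastic ℝ V) (f : V → ℝ) (c : ℝ) :
    (P *ᵥ fun z ↦ f z - c) = fun z ↦ (P *ᵥ f) z - c := by
  change P *ᵥ (f - fun _ ↦ c) = _
  rw [mulVec_sub, mulVec_const hP]
  rfl

lemma mulVec_apply_le_of_forall_ne_zero (hP : P ∈ rowStochastic ℝ V) {f g : V → ℝ} {z : V}
    (hfg : ∀ y, P z y ≠ 0 → f y ≤ g y) : (P *ᵥ f) z ≤ (P *ᵥ g) z := by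
  refine Finset.sum_le_sum fun y _ ↦ ?_
  rcases eq_or_ne (P z y) 0 with hzy | hzy
  · simp [hzy]
  · exact mul_le_mul_of_nonneg_left (hfg y hzy) (nonneg_of_mem_rowStochastic hP)

lemma mulVec_mono (hP : P ∈ rowStochastic ℝ V) {f g : V → ℝ} (hfg : f ≤ g) : P *ᵥ f ≤ P *ᵥ g :=
  fun _ ↦ mulVec_apply_le_of_forall_ne_zero hP fun y _ ↦ hfg y

lemma pow_mulVec_le_add (hP : P ∈ rowStochastic ℝ V) {f : V → ℝ} {ε : ℝ}
    (hf : ∀ z, (P *ᵥ f) z ≤ f z + ε) (k : ℕ) (z : V) : (P ^ k *ᵥ f) z ≤ f z + k * ε := by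
  induction k generalizing z with
  | zero => simp
  | succ k ih =>
    have hmono : (P *ᵥ (P ^ k *ᵥ f)) z ≤ (P *ᵥ (f + fun _ ↦ k * ε)) z := mulVec_mono hP ih z
    rw [mulVec_add, mulVec_const hP, Pi.add_apply] at hmono
    rw [pow_succ', ← mulVec_mulVec]
    push_cast
    linarith [hf z]

lemma sub_le_pow_mulVec (hP : P ∈ rowStochastic ℝ V) {f : V → ℝ} {ε : ℝ}
    (hf : ∀ z, f z - ε ≤ (P *ᵥ f) z) (k : ℕ) (z : V) : f z - k * ε ≤ (P ^ k *ᵥ f) z := by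
  have hneg := pow_mulVec_le_add hP (f := -f) (ε := ε)
    (fun z ↦ by simp only [mulVec_neg, Pi.neg_apply]; linarith [hf z]) k z
  simp only [mulVec_neg, Pi.neg_apply] at hneg
  linarith

lemma mulVec_apply_sq_le (hP : P ∈ rowStochastic ℝ V) (f : V → ℝ) (z : V) :
    (P *ᵥ f) z ^ 2 ≤ (P *ᵥ fun y ↦ f y ^ 2) z :=
  even_two.convexOn_pow.map_sum_le (fun _ _ ↦ nonneg_of_mem_rowStochastic hP)
    (sum_row_of_mem_rowStochastic hP z) (fun _ _ ↦ mem_univ _)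

end RowStochastic

section DoublyStochastic

variable {V : Type*} [Fintype V] {P : Matrix V V ℝ}

lemma mem_rowStochastic_of_mem_doublyStochastic (hP : P ∈ doublyStochastic ℝ V) :
    P ∈ rowStochastic ℝ V :=
  (mem_doublyStochastic_iff_mem_rowStochastic_and_mem_colStochastic.1 hP).1

lemma dotProduct_self_mulVec_le (hP : P ∈ doublyStochastic ℝ V) (f : V → ℝ) :
    (P *ᵥ f) ⬝ᵥ (P *ᵥ f) ≤ f ⬝ᵥ f := by
  calc (P *ᵥ f) ⬝ᵥ (P *ᵥ f) ≤ ∑ z, (P *ᵥ fun y ↦ f y ^ 2) z := Finset.sum_le_sum fun z _ ↦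
        (sq _).symm.trans_le
          (mulVec_apply_sq_le (mem_rowStochastic_of_mem_doublyStochastic hP) f z)
    _ = f ⬝ᵥ f := by
        rw [sum_mulVec_of_mem_doublyStochastic hP]
        exact Finset.sum_congr rfl fun z _ ↦ sq _

lemma dotProduct_self_sub_mulVec_le (hP : P ∈ doublyStochastic ℝ V) (f : V → ℝ) :
    (f - P *ᵥ f) ⬝ᵥ (f - P *ᵥ f) ≤ 2 * (f ⬝ᵥ (f - P *ᵥ f)) := by
  have hle := dotProduct_self_mulVec_le hP f
  simp only [dotProduct_sub, sub_dotProduct, dotProduct_comm (P *ᵥ f) f]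
  linarith

/-- The lazy version of a chain: stay put with probability `1 / 2`, otherwise move by `P`.  It makes
the spectrum nonnegative, so that a spectral gap alone forces geometric decay. -/
noncomputable def lazyChain (P : Matrix V V ℝ) : Matrix V V ℝ := (1 / 2 : ℝ) • (1 + P)

lemma lazyChain_mulVec_apply (P : Matrix V V ℝ) (f : V → ℝ) (z : V) :
    (lazyChain P *ᵥ f) z = f z - (f z - (P *ᵥ f) z) / 2 := by
  simp only [lazyChain, smul_mulVec, add_mulVec, one_mulVec, Pi.smul_apply,
    Pi.add_apply, smul_eq_mul]
  ring

lemma lazyChain_mem_doublyStochastic (hP : P ∈ doublyStochastic ℝ V) :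
    lazyChain P ∈ doublyStochastic ℝ V := by
  rw [lazyChain, smul_add]
  exact convex_doublyStochastic (one_mem (doublyStochastic ℝ V)) hP (by norm_num) (by norm_num)
    (by norm_num)

end DoublyStochastic

section Poincare

variable {V : Type*} [Fintype V] {P : Matrix V V ℝ} {β : ℝ}

/-- The Poincaré inequality with constant `β` for a chain `P` with uniform stationary law: `β` times
the variance of `f` is at most the energy `⟨f, (1 - P) f⟩`. -/
def PoincareInequality (P : Matrix V V ℝ) (β : ℝ) : Prop :=
  ∀ f : V → ℝ, ∑ z, f z = 0 → β * (f ⬝ᵥ f) ≤ f ⬝ᵥ (f - P *ᵥ f)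

lemma le_div_sq_of_sq_mul_le {a c K : ℝ} (ha : 0 ≤ a) (hc : 0 < c) (hK : 0 ≤ K)
    (h : (c * a) ^ 2 ≤ K * a) : a ≤ K / c ^ 2 := by
  rcases ha.eq_or_lt with rfl | ha
  · positivity
  · rw [le_div_iff₀ (by positivity)]
    exact le_of_mul_le_mul_right (by linarith [h, mul_pow c a 2]) ha

lemma sq_apply_le_dotProduct_self (f : V → ℝ) (x : V) : f x ^ 2 ≤ f ⬝ᵥ f := by
  rw [sq]
  exact Finset.single_le_sum (f := fun z ↦ f z * f z) (fun z _ ↦ mul_self_nonneg _)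
    (Finset.mem_univ x)

lemma sq_sum_le_ncard_mul_dotProduct_self {f : V → ℝ} {F : Set V} (hf : ∀ z ∉ F, f z = 0) :
    (∑ z, f z) ^ 2 ≤ F.ncard * (f ⬝ᵥ f) := by
  have hsum : ∑ z, f z = ∑ z ∈ F.toFinset, f z :=
    (Finset.sum_subset (Finset.subset_univ _) fun z _ hz ↦ hf z (by simpa using hz)).symm
  rw [hsum, Set.ncard_eq_toFinset_card' F]
  refine sq_sum_le_card_mul_sum_sq.trans ?_
  gcongr
  simp only [sq]
  exact Finset.sum_le_sum_of_subset_of_nonneg (Finset.subset_univ _) fun z _ _ ↦ mul_self_nonneg _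

lemma balance_sub_mulVec_balance (hP : P ∈ rowStochastic ℝ V) (f : V → ℝ) :
    Fintype.balance f - P *ᵥ Fintype.balance f = f - P *ᵥ f := by
  funext z
  simp only [Fintype.balance_apply, Pi.sub_apply]
  change _ - (P *ᵥ fun z ↦ f z - 𝔼 y, f y) z = _
  rw [mulVec_sub_const hP, sub_sub_sub_cancel_right]

namespace PoincareInequality

lemma balance (hP : P ∈ doublyStochastic ℝ V) (hgap : PoincareInequality P β) (f : V → ℝ) :
    β * (f ⬝ᵥ f - (∑ z, f z) ^ 2 / Fintype.card V) ≤ f ⬝ᵥ (f - P *ᵥ f) := by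
  have hsum : ∑ z, (f - P *ᵥ f) z = 0 := by
    simp [Finset.sum_sub_distrib, sum_mulVec_of_mem_doublyStochastic hP]
  have hnorm : Fintype.balance f ⬝ᵥ Fintype.balance f
      = f ⬝ᵥ f - (∑ z, f z) ^ 2 / Fintype.card V := by
    cases isEmpty_or_nonempty V
    · simp
    · simp only [Fintype.balance, sub_dotProduct, dotProduct_sub]
      simp only [dotProduct, Function.const_apply, ← Finset.sum_mul, ← Finset.mul_sum,
        Fintype.expect_eq_sum_div_card, Finset.sum_const, Finset.card_univ, nsmul_eq_mul]
      field_simp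
      ring
  have henergy : Fintype.balance f ⬝ᵥ (f - P *ᵥ f) = f ⬝ᵥ (f - P *ᵥ f) := by
    rw [Fintype.balance, sub_dotProduct, sub_eq_self]
    simp only [dotProduct, Function.const_apply, ← Finset.mul_sum, hsum, mul_zero]
  have hbal := hgap _ (Fintype.sum_balance f)
  rwa [balance_sub_mulVec_balance (mem_rowStochastic_of_mem_doublyStochastic hP), hnorm,
    henergy] at hbal

lemma dotProduct_self_le (hgap : PoincareInequality P β) (hβ : 0 < β) {f : V → ℝ}
    (hf : ∑ z, f z = 0) :
    f ⬝ᵥ f ≤ (f - P *ᵥ f) ⬝ᵥ (f - P *ᵥ f) / β ^ 2 := by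
  have hnonneg : ∀ g : V → ℝ, 0 ≤ g ⬝ᵥ g := fun g ↦ Finset.sum_nonneg fun z _ ↦ mul_self_nonneg _
  refine le_div_sq_of_sq_mul_le (hnonneg f) hβ (hnonneg _) ?_
  calc (β * (f ⬝ᵥ f)) ^ 2 ≤ (f ⬝ᵥ (f - P *ᵥ f)) ^ 2 :=
        pow_le_pow_left₀ (mul_nonneg hβ.le (hnonneg f)) (hgap f hf) 2
    _ ≤ (f ⬝ᵥ f) * ((f - P *ᵥ f) ⬝ᵥ (f - P *ᵥ f)) := by
        simpa only [dotProduct, ← sq] using Finset.sum_mul_sq_le_sq_mul_sq Finset.univ f _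
    _ = (f - P *ᵥ f) ⬝ᵥ (f - P *ᵥ f) * (f ⬝ᵥ f) := mul_comm _ _

lemma dotProduct_self_lazyChain_mulVec_le (hP : P ∈ doublyStochastic ℝ V)
    (hgap : PoincareInequality P β) {f : V → ℝ} (hf : ∑ z, f z = 0) :
    (lazyChain P *ᵥ f) ⬝ᵥ (lazyChain P *ᵥ f) ≤ Real.exp (-(β / 2)) * (f ⬝ᵥ f) := by
  have hlazy : lazyChain P *ᵥ f = f - (1 / 2 : ℝ) • (f - P *ᵥ f) := by
    funext z
    simp only [lazyChain_mulVec_apply, Pi.sub_apply, Pi.smul_apply, smul_eq_mul]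
    ring
  have henergy := dotProduct_self_sub_mulVec_le hP f
  calc (lazyChain P *ᵥ f) ⬝ᵥ (lazyChain P *ᵥ f)
      = f ⬝ᵥ f - f ⬝ᵥ (f - P *ᵥ f) + 1 / 4 * ((f - P *ᵥ f) ⬝ᵥ (f - P *ᵥ f)) := by
        rw [hlazy, sub_dotProduct, dotProduct_sub, dotProduct_sub, smul_dotProduct,
          dotProduct_smul, smul_dotProduct, dotProduct_smul, dotProduct_comm (f - P *ᵥ f) f]
        simp only [smul_eq_mul]
        ring
    _ ≤ (-(β / 2) + 1) * (f ⬝ᵥ f) := by linarith [hgap f hf]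
    _ ≤ Real.exp (-(β / 2)) * (f ⬝ᵥ f) := by
        gcongr
        · exact Finset.sum_nonneg fun z _ ↦ mul_self_nonneg _
        · exact Real.add_one_le_exp _

lemma dotProduct_self_lazyChain_pow_mulVec_le (hP : P ∈ doublyStochastic ℝ V)
    (hgap : PoincareInequality P β) {f : V → ℝ} (hf : ∑ z, f z = 0) (k : ℕ) :
    (lazyChain P ^ k *ᵥ f) ⬝ᵥ (lazyChain P ^ k *ᵥ f) ≤ Real.exp (-(β / 2) * k) * (f ⬝ᵥ f) := by
  have hQ := lazyChain_mem_doublyStochastic hP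
  induction k with
  | zero => simp
  | succ k ih =>
    rw [pow_succ', ← mulVec_mulVec]
    refine (hgap.dotProduct_self_lazyChain_mulVec_le hP ?_).trans ?_
    · rw [sum_mulVec_of_mem_doublyStochastic (pow_mem hQ k), hf]
    · calc _ ≤ Real.exp (-(β / 2)) * (Real.exp (-(β / 2) * k) * (f ⬝ᵥ f)) := by gcongr
        _ = _ := by rw [← mul_assoc, ← Real.exp_add]; push_cast; ring_nf

/-- Faber–Krahn: by Cauchy–Schwarz, the variance of a function living on a set of density `θ < 1` is
comparable to its second moment. -/
lemma apply_le_of_sub_mulVec_le_one (hP : P ∈ doublyStochastic ℝ V) (hgap : PoincareInequality P β)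
    (hβ : 0 < β) {F : Set V} {θ : ℝ} (hθ : θ < 1) (hF : (F.ncard : ℝ) ≤ θ * Fintype.card V)
    {v : V → ℝ} (hv : 0 ≤ v) (hvF : ∀ z ∉ F, v z = 0) (hPv : ∀ z, 0 < v z → v z - (P *ᵥ v) z ≤ 1)
    (x : V) : v x ≤ √(Fintype.card V) / (β * (1 - θ)) := by
  have hN : (0 : ℝ) < Fintype.card V := by exact_mod_cast Fintype.card_pos_iff.2 ⟨x⟩
  have hvv : 0 ≤ v ⬝ᵥ v := Finset.sum_nonneg fun z _ ↦ mul_self_nonneg _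
  have hc : 0 < β * (1 - θ) := mul_pos hβ (sub_pos.2 hθ)
  have henergy : v ⬝ᵥ (v - P *ᵥ v) ≤ ∑ z, v z := by
    refine Finset.sum_le_sum fun z _ ↦ ?_
    rcases (hv z).eq_or_lt with hz | hz
    · simp [← hz]
    · exact mul_le_of_le_one_right hz.le (hPv z hz)
  have hmass : (∑ z, v z) ^ 2 ≤ θ * Fintype.card V * (v ⬝ᵥ v) :=
    (sq_sum_le_ncard_mul_dotProduct_self hvF).trans (by gcongr)
  have hvar : (1 - θ) * (v ⬝ᵥ v) ≤ v ⬝ᵥ v - (∑ z, v z) ^ 2 / Fintype.card V := by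
    have : (∑ z, v z) ^ 2 / Fintype.card V ≤ θ * (v ⬝ᵥ v) := by
      rw [div_le_iff₀ hN]
      linarith
    linarith
  have hsq : (β * (1 - θ) * (v ⬝ᵥ v)) ^ 2 ≤ Fintype.card V * (v ⬝ᵥ v) := by
    calc (β * (1 - θ) * (v ⬝ᵥ v)) ^ 2 ≤ (∑ z, v z) ^ 2 := by
          gcongr
          calc β * (1 - θ) * (v ⬝ᵥ v) ≤ β * (v ⬝ᵥ v - (∑ z, v z) ^ 2 / Fintype.card V) := by
                rw [mul_assoc]; gcongr
            _ ≤ _ := (hgap.balance hP v).trans henergy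
      _ ≤ θ * Fintype.card V * (v ⬝ᵥ v) := hmass
      _ ≤ Fintype.card V * (v ⬝ᵥ v) := by gcongr; exact mul_le_of_le_one_left hN.le hθ.le
  refine le_of_sq_le_sq ?_ (by positivity)
  rw [div_pow, Real.sq_sqrt hN.le]
  exact (sq_apply_le_dotProduct_self v x).trans (le_div_sq_of_sq_mul_le hvv hc hN.le hsq)

end PoincareInequality

end Poincare

section HittingTime

variable {V : Type*} [Fintype V] {P : Matrix V V ℝ} {β : ℝ} {A F : Set V} {h p : V → ℝ}

lemma PoincareInequality.apply_le_add_of_boundary_le (hP : P ∈ doublyStochastic ℝ V)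
    (hgap : PoincareInequality P β) (hβ : 0 < β) {θ D : ℝ} (hθ : θ < 1)
    (hF : (F.ncard : ℝ) ≤ θ * Fintype.card V) {g : V → ℝ}
    (hg : ∀ z ∈ F, g z - (P *ᵥ g) z ≤ 1) (hgD : ∀ z ∈ F, ∀ y ∉ F, P z y ≠ 0 → g y ≤ D)
    {x : V} (hx : x ∈ F) : g x ≤ D + √(Fintype.card V) / (β * (1 - θ)) := by
  have hrow := mem_rowStochastic_of_mem_doublyStochastic hP
  set v : V → ℝ := F.indicator fun z ↦ max (g z - D) 0
  have hv : 0 ≤ v := indicator_nonneg fun z _ ↦ le_max_right _ _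
  have hvF : ∀ z ∈ F, v z = max (g z - D) 0 := fun z hz ↦ indicator_of_mem hz _
  have hPv : ∀ z, 0 < v z → v z - (P *ᵥ v) z ≤ 1 := by
    intro z hz
    have hzF : z ∈ F := by
      by_contra hzF
      exact hz.ne' (indicator_of_notMem hzF _)
    have hvz : v z = g z - D := by
      rw [hvF z hzF] at hz ⊢
      exact max_eq_left (by_contra fun hneg ↦ hz.ne' (max_eq_right (not_le.1 hneg).le))
    have hle : (P *ᵥ fun y ↦ g y - D) z ≤ (P *ᵥ v) z := by
      refine mulVec_apply_le_of_forall_ne_zero hrow fun y hy ↦ ?_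
      by_cases hyF : y ∈ F
      · exact (le_max_left _ _).trans_eq (hvF y hyF).symm
      · exact (sub_nonpos.2 (hgD z hzF y hyF hy)).trans (hv y)
    rw [mulVec_sub_const hrow] at hle
    linarith [hg z hzF]
  have hvx := hgap.apply_le_of_sub_mulVec_le_one hP hβ hθ hF hv
    (fun z hz ↦ indicator_of_notMem hz _) hPv x
  linarith [(le_max_left (g x - D) 0).trans_eq (hvF x hx).symm]

/-- `h` solves the equations of the mean hitting time of `A` for the chain `P`. -/
structure IsMeanHittingTime (P : Matrix V V ℝ) (A : Set V) (h : V → ℝ) : Prop where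
  nonneg : 0 ≤ h
  apply_of_mem : ∀ z ∈ A, h z = 0
  apply_of_notMem : ∀ z ∉ A, h z = 1 + (P *ᵥ h) z

/-- `p` solves the equations of the probability that the chain `P` leaves `F` before it hits `A`. -/
structure IsEscapeProbability (P : Matrix V V ℝ) (A F : Set V) (p : V → ℝ) : Prop where
  apply_of_mem : ∀ z ∈ A, p z = 0
  apply_of_notMem : ∀ z ∉ A, z ∉ F → p z = 1
  apply_eq_mulVec : ∀ z ∉ A, z ∈ F → p z = (P *ᵥ p) z

/-- The defect in `h = 1 + P h`.  If `h` is the mean hitting time of `A`, this is the mean return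
time to `A` on `A`, and zero off `A`. -/
def meanReturnTime (P : Matrix V V ℝ) (h : V → ℝ) (z : V) : ℝ := 1 - (h z - (P *ᵥ h) z)

lemma sum_meanReturnTime (hP : P ∈ doublyStochastic ℝ V) (h : V → ℝ) :
    ∑ z, meanReturnTime P h z = Fintype.card V := by
  simp [meanReturnTime, Finset.sum_sub_distrib, sum_mulVec_of_mem_doublyStochastic hP]

/-- A barrier at `a` with error `ε`: a nonnegative potential whose Laplacian is at least `1 / 2` at
`a` and at least `-ε` everywhere. -/
structure IsBarrier (P : Matrix V V ℝ) (a : V) (ε : ℝ) (φ : V → ℝ) : Prop where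
  nonneg : 0 ≤ φ
  le_sub_mulVec : ∀ z, (Pi.single a (1 / 2) : V → ℝ) z - ε ≤ φ z - (P *ᵥ φ) z

namespace IsMeanHittingTime

lemma meanReturnTime_of_notMem (hh : IsMeanHittingTime P A h) {z : V} (hz : z ∉ A) :
    meanReturnTime P h z = 0 := by
  rw [meanReturnTime, hh.apply_of_notMem z hz]
  ring

lemma meanReturnTime_nonneg (hP : P ∈ rowStochastic ℝ V) (hh : IsMeanHittingTime P A h) (z : V) :
    0 ≤ meanReturnTime P h z := by
  by_cases hz : z ∈ A
  · have hPh : 0 ≤ (P *ᵥ h) z := nonneg_mulVec_of_mem_rowStochastic hP hh.nonneg z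
    rw [meanReturnTime, hh.apply_of_mem z hz]
    linarith
  · exact (hh.meanReturnTime_of_notMem hz).ge

lemma dotProduct_sub_mulVec (hh : IsMeanHittingTime P A h) : h ⬝ᵥ (h - P *ᵥ h) = ∑ z, h z := by
  refine Finset.sum_congr rfl fun z _ ↦ ?_
  by_cases hz : z ∈ A
  · simp [hh.apply_of_mem z hz]
  · rw [Pi.sub_apply, sub_eq_of_eq_add (hh.apply_of_notMem z hz), mul_one]

lemma dotProduct_self_sub_mulVec (hP : P ∈ doublyStochastic ℝ V) (h : V → ℝ) :
    (h - P *ᵥ h) ⬝ᵥ (h - P *ᵥ h)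
      = meanReturnTime P h ⬝ᵥ meanReturnTime P h - Fintype.card V := by
  have hsub : h - P *ᵥ h = 1 - meanReturnTime P h := by
    funext z
    simp [meanReturnTime]
  rw [hsub, sub_dotProduct, dotProduct_sub, dotProduct_sub, dotProduct_one, one_dotProduct,
    dotProduct_one, sum_meanReturnTime hP]
  simp

lemma card_div_le_expect (hP : P ∈ doublyStochastic ℝ V) (hh : IsMeanHittingTime P A h)
    (hA : A.Nonempty) (hcard : 2 * (A.ncard : ℝ) ≤ Fintype.card V) :
    Fintype.card V / (4 * A.ncard : ℝ) ≤ 𝔼 z, h z := by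
  have hA' : (0 : ℝ) < A.ncard := by exact_mod_cast hA.ncard_pos
  have hN : (0 : ℝ) < Fintype.card V := by linarith
  have hmass : (Fintype.card V : ℝ) ^ 2
      ≤ A.ncard * (meanReturnTime P h ⬝ᵥ meanReturnTime P h) := by
    rw [← sum_meanReturnTime hP h]
    exact sq_sum_le_ncard_mul_dotProduct_self fun z ↦ hh.meanReturnTime_of_notMem
  have henergy := dotProduct_self_sub_mulVec_le hP h
  rw [dotProduct_self_sub_mulVec hP, hh.dotProduct_sub_mulVec] at henergy
  rw [Fintype.expect_eq_sum_div_card, div_le_div_iff₀ (by positivity) hN]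
  nlinarith

lemma abs_lazyChain_pow_mulVec_sub_expect_le (hP : P ∈ doublyStochastic ℝ V)
    (hgap : PoincareInequality P β) (hβ : 0 < β) (hh : IsMeanHittingTime P A h) (k : ℕ) (y : V) :
    |(lazyChain P ^ k *ᵥ h) y - 𝔼 z, h z| ≤ Real.exp (-(β / 4) * k) * Fintype.card V / β := by
  have hrow := mem_rowStochastic_of_mem_doublyStochastic hP
  have hreturn : meanReturnTime P h ⬝ᵥ meanReturnTime P h ≤ (Fintype.card V : ℝ) ^ 2 := by
    rw [← sum_meanReturnTime hP h]
    simpa only [dotProduct, ← sq] using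
      Finset.sum_sq_le_sq_sum_of_nonneg fun z _ ↦ hh.meanReturnTime_nonneg hrow z
  have hnorm : Fintype.balance h ⬝ᵥ Fintype.balance h ≤ (Fintype.card V : ℝ) ^ 2 / β ^ 2 := by
    refine (hgap.dotProduct_self_le hβ (Fintype.sum_balance h)).trans ?_
    rw [balance_sub_mulVec_balance hrow, dotProduct_self_sub_mulVec hP]
    gcongr
    linarith [(Fintype.card V).cast_nonneg (α := ℝ)]
  have hsub : (lazyChain P ^ k *ᵥ h) y - 𝔼 z, h z
      = (lazyChain P ^ k *ᵥ Fintype.balance h) y :=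
    (congrFun (mulVec_sub_const (mem_rowStochastic_of_mem_doublyStochastic
      (pow_mem (lazyChain_mem_doublyStochastic hP) k)) h (𝔼 z, h z)) y).symm
  rw [hsub]
  refine abs_le_of_sq_le_sq ?_ (by positivity)
  calc (lazyChain P ^ k *ᵥ Fintype.balance h) y ^ 2
      ≤ Real.exp (-(β / 2) * k) * (Fintype.balance h ⬝ᵥ Fintype.balance h) :=
        (sq_apply_le_dotProduct_self _ y).trans
          (hgap.dotProduct_self_lazyChain_pow_mulVec_le hP (Fintype.sum_balance h) k)
    _ ≤ Real.exp (-(β / 2) * k) * ((Fintype.card V : ℝ) ^ 2 / β ^ 2) := by gcongr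
    _ = (Real.exp (-(β / 4) * k) * Fintype.card V / β) ^ 2 := by
        rw [div_pow, mul_pow, ← Real.exp_nat_mul, mul_div_assoc]
        congr 2
        push_cast
        ring

lemma sub_le_lazyChain_pow_mulVec (hP : P ∈ doublyStochastic ℝ V) (hh : IsMeanHittingTime P A h)
    (k : ℕ) (y : V) : h y - k * (1 / 2) ≤ (lazyChain P ^ k *ᵥ h) y := by
  refine sub_le_pow_mulVec (mem_rowStochastic_of_mem_doublyStochastic
    (lazyChain_mem_doublyStochastic hP)) (fun z ↦ ?_) k y
  have hz := hh.meanReturnTime_nonneg (mem_rowStochastic_of_mem_doublyStochastic hP) z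
  rw [meanReturnTime] at hz
  rw [lazyChain_mulVec_apply]
  linarith

/-- Superposing barriers with the mean return times as weights compensates the only points where `h`
is not superharmonic. -/
lemma lazyChain_pow_mulVec_le_of_isBarrier (hP : P ∈ doublyStochastic ℝ V)
    (hh : IsMeanHittingTime P A h) {ε δ : ℝ} {φ : V → V → ℝ} (hφ : ∀ a, IsBarrier P a ε (φ a))
    {y : V} (hy : ∀ a ∈ A, φ a y ≤ δ) (k : ℕ) :
    (lazyChain P ^ k *ᵥ h) y ≤ h y + Fintype.card V * (2 * δ + k * ε) := by
  have hrow := mem_rowStochastic_of_mem_doublyStochastic hP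
  have hlazy := mem_rowStochastic_of_mem_doublyStochastic (lazyChain_mem_doublyStochastic hP)
  set ρ := meanReturnTime P h with hρ
  have hρ0 : ∀ a, 0 ≤ ρ a := hh.meanReturnTime_nonneg hrow
  have hρN : ∑ a, ρ a = Fintype.card V := sum_meanReturnTime hP h
  set Φ : V → ℝ := ∑ a, ρ a • φ a with hΦ
  have hΦ0 : 0 ≤ Φ := Finset.sum_nonneg fun a _ ↦ smul_nonneg (hρ0 a) (hφ a).nonneg
  have hΦy : Φ y ≤ Fintype.card V * δ := by
    rw [hΦ, ← hρN, Finset.sum_mul, Finset.sum_apply]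
    refine Finset.sum_le_sum fun a _ ↦ ?_
    by_cases ha : a ∈ A
    · exact mul_le_mul_of_nonneg_left (hy a ha) (hρ0 a)
    · simp [hρ, hh.meanReturnTime_of_notMem ha]
  have hPΦ : ∀ z, ρ z / 2 - Fintype.card V * ε ≤ Φ z - (P *ᵥ Φ) z := by
    intro z
    calc ρ z / 2 - Fintype.card V * ε = ∑ a, ρ a * ((Pi.single a (1 / 2) : V → ℝ) z - ε) := by
          simp [mul_sub, Finset.sum_sub_distrib, ← Finset.sum_mul, hρN, Pi.single_apply,
            div_eq_mul_inv]
      _ ≤ ∑ a, ρ a * (φ a z - (P *ᵥ φ a) z) := Finset.sum_le_sum fun a _ ↦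
          mul_le_mul_of_nonneg_left ((hφ a).le_sub_mulVec z) (hρ0 a)
      _ = Φ z - (P *ᵥ Φ) z := by
          simp [hΦ, mulVec_sum, mulVec_smul, mul_sub, Finset.sum_sub_distrib]
  have hstep : ∀ z, (lazyChain P *ᵥ (h + (2 : ℝ) • Φ)) z
      ≤ (h + (2 : ℝ) • Φ) z + Fintype.card V * ε := by
    intro z
    have hz := hPΦ z
    rw [hρ, meanReturnTime] at hz
    simp only [lazyChain_mulVec_apply, mulVec_add, mulVec_smul, Pi.add_apply, Pi.smul_apply,
      smul_eq_mul]
    linarith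
  have hmono := mulVec_mono (mem_rowStochastic_of_mem_doublyStochastic
    (pow_mem (lazyChain_mem_doublyStochastic hP) k))
    (le_add_of_nonneg_right (smul_nonneg zero_le_two hΦ0) : h ≤ h + (2 : ℝ) • Φ) y
  have hpow := pow_mulVec_le_add hlazy hstep k y
  simp only [Pi.add_apply, Pi.smul_apply, smul_eq_mul] at hpow
  linarith

lemma abs_sub_expect_le_of_isBarrier (hP : P ∈ doublyStochastic ℝ V)
    (hgap : PoincareInequality P β) (hβ : 0 < β) (hh : IsMeanHittingTime P A h) {ε δ : ℝ}
    (hε : 0 ≤ ε) (hδ : 0 ≤ δ) {φ : V → V → ℝ} (hφ : ∀ a, IsBarrier P a ε (φ a)) {y : V}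
    (hy : ∀ a ∈ A, φ a y ≤ δ) (k : ℕ) :
    |h y - 𝔼 z, h z|
      ≤ k + Fintype.card V * (2 * δ + k * ε + Real.exp (-(β / 4) * k) / β) := by
  have hmix := abs_le.1 (hh.abs_lazyChain_pow_mulVec_sub_expect_le hP hgap hβ k y)
  have hlower := hh.sub_le_lazyChain_pow_mulVec hP k y
  have hupper := hh.lazyChain_pow_mulVec_le_of_isBarrier hP hφ hy k
  have hpos : 0 ≤ Fintype.card V * (2 * δ + k * ε) := by positivity
  rw [mul_add, mul_div_left_comm, ← mul_div_assoc, mul_comm, abs_le]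
  constructor <;> linarith [hmix.1, hmix.2, hpos, k.cast_nonneg (α := ℝ)]

lemma abs_sub_expect_mul_le (hP : P ∈ doublyStochastic ℝ V) (hgap : PoincareInequality P β)
    (hβ : 0 < β) (hh : IsMeanHittingTime P A h) (hp : IsEscapeProbability P A F p)
    (hFA : Disjoint F A) (hF : 4 * (F.ncard : ℝ) ≤ 3 * Fintype.card V) {x : V} {D : ℝ} (hD : 0 ≤ D)
    (hfar : ∀ y ∉ A, y ∉ F → (y = x ∨ ∃ z ∈ F, P z y ≠ 0) → |h y - 𝔼 z, h z| ≤ D) :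
    |h x - (𝔼 z, h z) * p x| ≤ D + 4 * √(Fintype.card V) / β := by
  set ψ : V → ℝ := h - (𝔼 z, h z) • p with hψ
  have hψ_out : ∀ y ∉ F, (y = x ∨ ∃ z ∈ F, P z y ≠ 0) → |ψ y| ≤ D := by
    intro y hyF hy
    by_cases hyA : y ∈ A
    · simpa [hψ, hh.apply_of_mem y hyA, hp.apply_of_mem y hyA]
    · simpa [hψ, hp.apply_of_notMem y hyA hyF] using hfar y hyA hyF hy
  change |ψ x| ≤ _
  by_cases hx : x ∈ F
  · have hψ_in : ∀ z ∈ F, ψ z - (P *ᵥ ψ) z = 1 := by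
      intro z hz
      have hzA := hFA.notMem_of_mem_left hz
      simp only [hψ, mulVec_sub, mulVec_smul, Pi.sub_apply, Pi.smul_apply, smul_eq_mul,
        hh.apply_of_notMem z hzA, ← hp.apply_eq_mulVec z hzA hz]
      ring
    have hbound : ∀ g : V → ℝ, (∀ z ∈ F, g z - (P *ᵥ g) z ≤ 1) → (∀ y, g y ≤ |ψ y|) →
        g x ≤ D + 4 * √(Fintype.card V) / β := by
      intro g hg hgψ
      refine (hgap.apply_le_add_of_boundary_le hP hβ (θ := 3 / 4) (by norm_num) (by linarith) hg
        (fun z hz y hy hzy ↦ (hgψ y).trans (hψ_out y hy (.inr ⟨z, hz, hzy⟩))) hx).trans_eq ?_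
      field_simp
      ring
    refine abs_le'.2 ⟨hbound ψ (fun z hz ↦ (hψ_in z hz).le) fun y ↦ le_abs_self _,
      hbound (-ψ) (fun z hz ↦ ?_) fun y ↦ neg_le_abs _⟩
    rw [mulVec_neg, Pi.neg_apply, Pi.neg_apply]
    linarith [hψ_in z hz]
  · exact (hψ_out x hx (.inl rfl)).trans (le_add_of_nonneg_right (by positivity))

lemma abs_div_expect_sub_le (hP : P ∈ doublyStochastic ℝ V) (hgap : PoincareInequality P β)
    (hβ : 0 < β) (hh : IsMeanHittingTime P A h) (hp : IsEscapeProbability P A F p)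
    (hA : A.Nonempty) (hcard : 2 * (A.ncard : ℝ) ≤ Fintype.card V)
    (hFA : Disjoint F A) (hF : 4 * (F.ncard : ℝ) ≤ 3 * Fintype.card V) {x : V} {D : ℝ} (hD : 0 ≤ D)
    (hfar : ∀ y ∉ A, y ∉ F → (y = x ∨ ∃ z ∈ F, P z y ≠ 0) → |h y - 𝔼 z, h z| ≤ D) :
    |h x / (𝔼 z, h z) - p x|
      ≤ 4 * A.ncard / Fintype.card V * (D + 4 * √(Fintype.card V) / β) := by
  have hA' : (0 : ℝ) < A.ncard := by exact_mod_cast hA.ncard_pos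
  have hmean := hh.card_div_le_expect hP hA hcard
  have hmean_pos : 0 < 𝔼 z, h z :=
    (div_pos (by linarith) (by positivity)).trans_le hmean
  rw [div_sub' hmean_pos.ne', abs_div, abs_of_pos hmean_pos, div_le_iff₀ hmean_pos]
  refine (hh.abs_sub_expect_mul_le hP hgap hβ hp hFA hF hD hfar).trans ?_
  calc D + 4 * √(Fintype.card V) / β
      = 4 * A.ncard / Fintype.card V * (D + 4 * √(Fintype.card V) / β)
          * (Fintype.card V / (4 * A.ncard)) := by
        have : (Fintype.card V : ℝ) ≠ 0 := by linarith
        field_simp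
    _ ≤ _ := by gcongr

end IsMeanHittingTime

end HittingTime

section SpectralGap

variable {V : Type*} [Fintype V]

lemma dotProduct_eq_sum_orthonormalBasis {ι : Type*} [Fintype ι]
    (e : OrthonormalBasis ι ℝ (EuclideanSpace ℝ V)) (f g : V → ℝ) :
    f ⬝ᵥ g = ∑ i, ((e i).ofLp ⬝ᵥ f) * ((e i).ofLp ⬝ᵥ g) := by
  simpa [PiLp.inner_apply, dotProduct, mul_comm] using
    (e.sum_inner_mul_inner (WithLp.toLp 2 f) (WithLp.toLp 2 g)).symm

lemma mul_dotProduct_self_le_of_isHermitian {M : Matrix V V ℝ} (hM : M.IsHermitian) {β : ℝ}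
    {f : V → ℝ}
    (hβ : ∀ (v : V → ℝ) (μ : ℝ), M *ᵥ v = μ • v → v ≠ 0 → v ⬝ᵥ f = 0 ∨ β ≤ μ) :
    β * (f ⬝ᵥ f) ≤ f ⬝ᵥ (M *ᵥ f) := by
  set e := hM.eigenvectorBasis
  have heigen : ∀ i, M *ᵥ (e i).ofLp = hM.eigenvalues i • (e i).ofLp := hM.mulVec_eigenvectorBasis
  have hne : ∀ i, (e i).ofLp ≠ 0 := fun i hi ↦
    e.orthonormal.ne_zero i (by ext z; exact congrFun hi z)
  have hcoord : ∀ i, (e i).ofLp ⬝ᵥ (M *ᵥ f) = hM.eigenvalues i * ((e i).ofLp ⬝ᵥ f) := by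
    intro i
    rw [dotProduct_mulVec, ← mulVec_transpose, ← conjTranspose_eq_transpose_of_trivial, hM.eq,
      heigen, smul_dotProduct, smul_eq_mul]
  rw [dotProduct_eq_sum_orthonormalBasis e f f, dotProduct_eq_sum_orthonormalBasis e f (M *ᵥ f),
    Finset.mul_sum]
  refine Finset.sum_le_sum fun i _ ↦ ?_
  rw [hcoord, mul_left_comm _ (hM.eigenvalues i)]
  rcases hβ _ _ (heigen i) (hne i) with horth | hle
  · simp [horth]
  · exact mul_le_mul_of_nonneg_right hle (mul_self_nonneg _)

variable {G : SimpleGraph V} {d : ℕ} {β : ℝ}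

lemma IsReg.degree_eq (hreg : IsReg G d) (v : V) : G.degree v = d := by
  rw [← G.card_neighborSet_eq_degree, ← Nat.card_eq_fintype_card, hreg v]

lemma transP_mulVec_apply (G : SimpleGraph V) (d : ℕ) (f : V → ℝ) (z : V) :
    (transP G d *ᵥ f) z = (d : ℝ)⁻¹ * ∑ y ∈ G.neighborFinset z, f y := by
  simp [transP, mulVec, dotProduct, Finset.mul_sum, SimpleGraph.neighborFinset_eq_filter,
    Finset.sum_filter]

lemma transP_isSymm (G : SimpleGraph V) (d : ℕ) : (transP G d).IsSymm :=
  Matrix.IsSymm.ext fun i j ↦ by simp only [transP, Matrix.of_apply, G.adj_comm]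

lemma transP_mem_doublyStochastic (hd : d ≠ 0) (hreg : IsReg G d) :
    transP G d ∈ doublyStochastic ℝ V := by
  have hrow : transP G d *ᵥ 1 = 1 := by
    funext z
    simp [transP_mulVec_apply, hreg.degree_eq, hd]
  refine mem_doublyStochastic.2 ⟨fun i j ↦ ?_, hrow, ?_⟩
  · rw [transP, Matrix.of_apply]
    positivity
  · rw [← mulVec_transpose, (transP_isSymm G d).eq, hrow]

lemma eq_of_sub_transP_mulVec_eq_zero (hd : d ≠ 0) (hreg : IsReg G d) (hconn : G.Connected)
    {f : V → ℝ} (hf : f - transP G d *ᵥ f = 0) (u v : V) : f u = f v := by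
  refine (G.lapMatrix_mulVec_eq_zero_iff_forall_reachable (x := f)).1 ?_ u v (hconn u v)
  funext z
  have hz : f z - (d : ℝ)⁻¹ * ∑ y ∈ G.neighborFinset z, f y = 0 := by
    rw [← transP_mulVec_apply]
    exact congrFun hf z
  have hd' : (d : ℝ) ≠ 0 := by exact_mod_cast hd
  rw [SimpleGraph.lapMatrix_mulVec_apply, hreg.degree_eq]
  rw [Pi.zero_apply]
  field_simp at hz
  linarith

lemma poincareInequality_transP (hd : d ≠ 0) (hreg : IsReg G d) (hconn : G.Connected)
    (hgap : SpectralGapLB G d β) : PoincareInequality (transP G d) β := by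
  intro f hf
  have hsymm : (1 - transP G d).IsHermitian := by
    rw [IsHermitian, conjTranspose_eq_transpose_of_trivial, transpose_sub, transpose_one,
      (transP_isSymm G d).eq]
  have hle := mul_dotProduct_self_le_of_isHermitian hsymm (β := β) (f := f) fun v μ hv hv0 ↦
    (hgap v μ hv hv0).imp_left fun hμ ↦ ?_
  · rwa [sub_mulVec, one_mulVec] at hle
  · rw [hμ, zero_smul, sub_mulVec, one_mulVec] at hv
    obtain ⟨o⟩ := hconn.nonempty
    simp only [dotProduct, eq_of_sub_transP_mulVec_eq_zero hd hreg hconn hv _ o, ← Finset.mul_sum,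
      hf, mul_zero]

end SpectralGap

section EdgeCount

variable {V : Type*} {G : SimpleGraph V} {d : ℕ}

lemma adjPairs_eq_sum [Fintype V] (G : SimpleGraph V) (U : Set V) :
    adjPairs G U = ∑ u ∈ U.toFinset, (U.toFinset.filter (G.Adj u)).card := by
  have hset : {p : V × V | p.1 ∈ U ∧ p.2 ∈ U ∧ G.Adj p.1 p.2}
      = ((U.toFinset ×ˢ U.toFinset).filter fun p ↦ G.Adj p.1 p.2 : Finset (V × V)) := by
    ext p
    simp [and_assoc]
  rw [adjPairs, hset, Set.ncard_coe_finset, Finset.card_filter, Finset.sum_product]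
  simp only [Finset.card_filter]

lemma IsReg.mul_ncard_le [Finite V] (hreg : IsReg G d) (F : Set V) :
    d * F.ncard ≤ adjPairs G F + d * Fᶜ.ncard := by
  cases nonempty_fintype V
  have hsplit : ∀ u, d = (F.toFinset.filter (G.Adj u)).card
      + (Fᶜ.toFinset.filter (G.Adj u)).card := by
    intro u
    rw [← hreg.degree_eq u, ← G.card_neighborFinset_eq_degree, G.neighborFinset_eq_filter,
      Set.toFinset_compl, ← Finset.card_union_of_disjoint, ← Finset.filter_union,
      Finset.union_compl]
    exact Finset.disjoint_filter_filter disjoint_compl_right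
  have hout : ∑ u ∈ F.toFinset, (Fᶜ.toFinset.filter (G.Adj u)).card ≤ d * Fᶜ.ncard := by
    calc ∑ u ∈ F.toFinset, (Fᶜ.toFinset.filter (G.Adj u)).card
        = ∑ v ∈ Fᶜ.toFinset, (F.toFinset.filter fun u ↦ G.Adj u v).card :=
          Finset.sum_card_bipartiteAbove_eq_sum_card_bipartiteBelow G.Adj
      _ ≤ ∑ _v ∈ Fᶜ.toFinset, d := Finset.sum_le_sum fun v _ ↦ by
          rw [← hreg.degree_eq v, ← G.card_neighborFinset_eq_degree]
          exact Finset.card_le_card fun u hu ↦ by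
            simpa [G.adj_comm] using (Finset.mem_filter.1 hu).2
      _ = d * Fᶜ.ncard := by rw [Finset.sum_const, smul_eq_mul, mul_comm,
          ← Set.ncard_eq_toFinset_card']
  calc d * F.ncard = ∑ _u ∈ F.toFinset, d := by
        rw [Finset.sum_const, smul_eq_mul, mul_comm, ← Set.ncard_eq_toFinset_card']
    _ = adjPairs G F + ∑ u ∈ F.toFinset, (Fᶜ.toFinset.filter (G.Adj u)).card := by
        rw [adjPairs_eq_sum, ← Finset.sum_add_distrib]
        exact Finset.sum_congr rfl fun u _ ↦ hsplit u
    _ ≤ _ := by gcongr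

lemma IsReg.four_mul_ncard_le [Fintype V] (hd : 3 ≤ d) (hreg : IsReg G d) {F : Set V}
    (hF : adjPairs G F ≤ 2 * F.ncard) : 4 * F.ncard ≤ 3 * Fintype.card V := by
  have hcount := hreg.mul_ncard_le F
  have hcompl := Set.ncard_add_ncard_compl F
  rw [Nat.card_eq_fintype_card] at hcompl
  nlinarith

end EdgeCount

section BallWithOneCycle

variable {V : Type*} [Fintype V] {G : SimpleGraph V} {a u : V}

/-- The number of neighbours of `u` which are closer to `a` than `u`. -/
noncomputable def parentCount (G : SimpleGraph V) (a u : V) : ℕ :=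
  (Finset.univ.filter fun v ↦ G.Adj u v ∧ G.dist a v < G.dist a u).card

/-- The number of neighbours of `u` at the same distance from `a` as `u`. -/
noncomputable def siblingCount (G : SimpleGraph V) (a u : V) : ℕ :=
  (Finset.univ.filter fun v ↦ G.Adj u v ∧ G.dist a v = G.dist a u).card

/-- Twice the contribution of `u` to the tree excess of the balls around `a`: every parent but the
first closes a cycle, and so does every sibling, whose edge is shared by two vertices. -/
noncomputable def cycleExcess (G : SimpleGraph V) (a u : V) : ℕ :=
  2 * parentCount G a u + siblingCount G a u - 2

lemma parentCount_add_siblingCount (G : SimpleGraph V) (a u : V) :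
    parentCount G a u + siblingCount G a u
      = ((G.neighborFinset u).filter fun v ↦ G.dist a v ≤ G.dist a u).card := by
  rw [parentCount, siblingCount, ← Finset.card_union_of_disjoint]
  · congr 1
    ext v
    simp [← and_or_left, le_iff_lt_or_eq]
  · exact Finset.disjoint_filter.2 fun v _ h h' ↦ h.2.ne h'.2

lemma parentCount_pos (hconn : G.Connected) (hu : u ≠ a) : 0 < parentCount G a u := by
  obtain ⟨p, hp⟩ := hconn.exists_walk_length_eq_dist u a
  cases p with
  | nil => exact absurd rfl hu
  | cons huv q =>
    refine Finset.card_pos.2 ⟨_, Finset.mem_filter.2 ⟨Finset.mem_univ _, huv, ?_⟩⟩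
    rw [G.dist_comm (u := a) (v := u), ← hp, SimpleGraph.Walk.length_cons, G.dist_comm]
    exact Nat.lt_succ_of_le (SimpleGraph.dist_le q)

lemma adjPairs_gball (G : SimpleGraph V) (a : V) (R : ℕ) :
    adjPairs G (gball G a R)
      = ∑ u ∈ (gball G a R).toFinset, (2 * parentCount G a u + siblingCount G a u) := by
  set B := (gball G a R).toFinset
  have hB : ∀ u, u ∈ B ↔ G.dist a u ≤ R := fun u ↦ Set.mem_toFinset
  have hsplit : ∀ u ∈ B, (B.filter (G.Adj u)).card = parentCount G a u + siblingCount G a u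
      + (B.filter fun v ↦ G.Adj u v ∧ G.dist a u < G.dist a v).card := by
    intro u hu
    rw [parentCount_add_siblingCount,
      ← Finset.card_filter_add_card_filter_not (s := B.filter (G.Adj u))
        (fun v ↦ G.dist a v ≤ G.dist a u), Finset.filter_filter, Finset.filter_filter]
    congr 2
    · ext v
      simp only [Finset.mem_filter, SimpleGraph.mem_neighborFinset]
      exact ⟨fun h ↦ h.2, fun h ↦ ⟨(hB v).2 (h.2.trans ((hB u).1 hu)), h⟩⟩
    · simp only [not_le]
  have hflip : ∑ u ∈ B, (B.filter fun v ↦ G.Adj u v ∧ G.dist a u < G.dist a v).card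
      = ∑ u ∈ B, parentCount G a u := by
    refine (Finset.sum_card_bipartiteAbove_eq_sum_card_bipartiteBelow
      fun u v ↦ G.Adj u v ∧ G.dist a u < G.dist a v).trans
        (Finset.sum_congr rfl fun v hv ↦ congrArg _ ?_)
    ext u
    simp only [Finset.mem_bipartiteBelow, Finset.mem_filter, Finset.mem_univ, true_and,
      G.adj_comm u v]
    exact ⟨fun h ↦ h.2, fun h ↦ ⟨(hB u).2 (h.2.le.trans ((hB v).1 hv)), h⟩⟩
  rw [adjPairs_eq_sum, Finset.sum_congr rfl hsplit, Finset.sum_add_distrib, hflip,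
    ← Finset.sum_add_distrib]
  exact Finset.sum_congr rfl fun u _ ↦ by ring

lemma sum_cycleExcess_le (hconn : G.Connected) {R : ℕ}
    (hball : adjPairs G (gball G a R) ≤ 2 * (gball G a R).ncard) :
    ∑ u ∈ (gball G a R).toFinset, cycleExcess G a u ≤ 2 := by
  have hterm : ∀ u, 2 + cycleExcess G a u
      = (2 * parentCount G a u + siblingCount G a u) + if u = a then 2 else 0 := by
    intro u
    split_ifs with hu
    · subst hu
      have hloop : siblingCount G u u = 0 := Finset.card_eq_zero.2 <|
        Finset.filter_eq_empty_iff.2 fun v _ hv ↦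
          hv.1.ne ((hconn.dist_eq_zero_iff).1 (hv.2.trans SimpleGraph.dist_self))
      simp [cycleExcess, parentCount, hloop]
    · have := parentCount_pos hconn hu
      rw [cycleExcess]
      omega
  have ha : a ∈ (gball G a R).toFinset :=
    Set.mem_toFinset.2 (SimpleGraph.dist_self.trans_le R.zero_le)
  have hsum := Finset.sum_congr rfl fun u (_ : u ∈ (gball G a R).toFinset) ↦ hterm u
  rw [Finset.sum_add_distrib, Finset.sum_add_distrib, ← adjPairs_gball, Finset.sum_ite_eq' _ a,
    if_pos ha, Finset.sum_const, smul_eq_mul, ← Set.ncard_eq_toFinset_card'] at hsum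
  omega

lemma two_mul_parentCount_add_siblingCount_le (hconn : G.Connected) (hu : u ≠ a) :
    2 * (parentCount G a u + siblingCount G a u)
      ≤ 2 + ∑ v with G.dist a v = G.dist a u, cycleExcess G a v := by
  set S := Finset.univ.filter fun v ↦ G.Adj u v ∧ G.dist a v = G.dist a u
  have hexcess : ∀ v ∈ S, 1 ≤ cycleExcess G a v := by
    intro v hv
    obtain ⟨huv, hdist⟩ := (Finset.mem_filter.1 hv).2
    have hva : v ≠ a := fun hva ↦ hu ((hconn.dist_eq_zero_iff).1
      (hdist.symm.trans (hva ▸ SimpleGraph.dist_self))).symm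
    have hparent := parentCount_pos hconn hva
    have hsibling : 0 < siblingCount G a v := Finset.card_pos.2
      ⟨u, Finset.mem_filter.2 ⟨Finset.mem_univ _, huv.symm, hdist.symm⟩⟩
    rw [cycleExcess]
    omega
  have huS : u ∉ S := by simp [S]
  have hsub : insert u S ⊆ Finset.univ.filter fun v ↦ G.dist a v = G.dist a u :=
    fun v hv ↦ by
      rcases Finset.mem_insert.1 hv with rfl | hv
      · simp
      · simpa using (Finset.mem_filter.1 hv).2.2
  have hlevel := Finset.sum_le_sum_of_subset (f := cycleExcess G a) hsub
  have hS : siblingCount G a u ≤ ∑ v ∈ S, cycleExcess G a v := by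
    simpa [siblingCount, S] using Finset.card_nsmul_le_sum S _ 1 hexcess
  have hparent := parentCount_pos hconn hu
  rw [Finset.sum_insert huS, cycleExcess] at hlevel
  omega

lemma exists_parentCount_add_siblingCount_le (hconn : G.Connected) {R : ℕ}
    (hball : adjPairs G (gball G a R) ≤ 2 * (gball G a R).ncard) :
    ∃ m, ∀ u, u ≠ a → G.dist a u ≤ R → parentCount G a u + siblingCount G a u ≤ 1 ∨
      parentCount G a u + siblingCount G a u ≤ 2 ∧ G.dist a u = m := by
  set level : ℕ → Finset V := fun j ↦ Finset.univ.filter fun v ↦ G.dist a v = j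
  have htotal := sum_cycleExcess_le hconn hball
  have hsub : ∀ j ≤ R, level j ⊆ (gball G a R).toFinset := fun j hj v hv ↦
    Set.mem_toFinset.2 ((Finset.mem_filter.1 hv).2.trans_le hj)
  have hlevel_le : ∀ j ≤ R, ∑ v ∈ level j, cycleExcess G a v ≤ 2 := fun j hj ↦
    (Finset.sum_le_sum_of_subset (hsub j hj)).trans htotal
  have hcount : ∀ u, u ≠ a → 2 * (parentCount G a u + siblingCount G a u)
      ≤ 2 + ∑ v ∈ level (G.dist a u), cycleExcess G a v := fun u hu ↦
    two_mul_parentCount_add_siblingCount_le hconn hu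
  by_cases hex : ∃ w, w ≠ a ∧ G.dist a w ≤ R ∧ 2 ≤ parentCount G a w + siblingCount G a w
  · obtain ⟨w, hwa, hwR, hw⟩ := hex
    refine ⟨G.dist a w, fun u hua huR ↦ or_iff_not_imp_left.2 fun hu ↦ ⟨?_, ?_⟩⟩
    · have := hcount u hua
      have := hlevel_le _ huR
      omega
    · by_contra hne
      have hdisj : Disjoint (level (G.dist a u)) (level (G.dist a w)) :=
        Finset.disjoint_filter.2 fun v _ hvu hvw ↦ hne (hvu.symm.trans hvw)
      have hunion := (Finset.sum_le_sum_of_subset (f := cycleExcess G a)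
        (Finset.union_subset (hsub _ huR) (hsub _ hwR))).trans htotal
      rw [Finset.sum_union hdisj] at hunion
      have := hcount u hua
      have := hcount w hwa
      omega
  · push Not at hex
    exact ⟨0, fun u hua huR ↦ .inl (Nat.le_of_lt_succ (hex u hua huR))⟩

end BallWithOneCycle

section RadialBarrier

/-- The radial profile `r ^ j` is harmonic on the `d`-regular tree for `r = (d - 1)⁻¹`.  The
second term, constant up to level `m`, makes room for the vertices of level `m` on a cycle. -/
noncomputable def radialProfile (r : ℝ) (m j : ℕ) : ℝ := r ^ j + 3 * r ^ max j m

variable {r : ℝ}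

lemma radialProfile_nonneg (hr0 : 0 ≤ r) (m j : ℕ) : 0 ≤ radialProfile r m j := by
  rw [radialProfile]
  positivity

lemma antitone_radialProfile (hr0 : 0 ≤ r) (hr1 : r ≤ 1) (m : ℕ) : Antitone (radialProfile r m) :=
  fun _ _ hij ↦ add_le_add (pow_le_pow_of_le_one hr0 hr1 hij) <|
    mul_le_mul_of_nonneg_left (pow_le_pow_of_le_one hr0 hr1 (max_le_max_right m hij))
      zero_le_three

lemma radialProfile_le (hr0 : 0 ≤ r) (hr1 : r ≤ 1) (m j : ℕ) : radialProfile r m j ≤ 4 * r ^ j := by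
  have := pow_le_pow_of_le_one hr0 hr1 (le_max_left j m)
  rw [radialProfile]
  linarith

lemma radialProfile_one_add_le (hr0 : 0 ≤ r) (hr : r ≤ 1 / 2) (m : ℕ) :
    radialProfile r m 1 + 1 / 2 ≤ radialProfile r m 0 := by
  have := pow_le_pow_of_le_one hr0 (hr.trans one_half_lt_one.le)
    (max_le_max_right m (Nat.zero_le 1))
  rw [radialProfile, radialProfile, pow_zero, pow_one]
  linarith

lemma radialProfile_add_mul_le {q : ℝ} (hr0 : 0 ≤ r) (hq : 1 ≤ q) (hqr : q * r = 1) (m j : ℕ) :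
    radialProfile r m j + q * radialProfile r m (j + 2) ≤ (q + 1) * radialProfile r m (j + 1) := by
  have hstep : ∀ k, q * r ^ (k + 1) = r ^ k := fun k ↦ by
    rw [pow_succ', ← mul_assoc, hqr, one_mul]
  have htree : r ^ j + q * r ^ (j + 2) = (q + 1) * r ^ (j + 1) := by
    linarith [hstep j, hstep (j + 1)]
  have hmax : r ^ max j m + q * r ^ max (j + 2) m ≤ (q + 1) * r ^ max (j + 1) m := by
    rcases lt_trichotomy (j + 1) m with hjm | rfl | hjm
    · rw [max_eq_right (by omega), max_eq_right (by omega), max_eq_right (by omega)]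
      linarith
    · rw [max_eq_right (by omega), max_eq_left (by omega), max_self, hstep]
      nlinarith [pow_nonneg hr0 (j + 1)]
    · rw [max_eq_left (by omega), max_eq_left (by omega), max_eq_left (by omega), htree]
  simp only [radialProfile]
  linarith

lemma two_mul_radialProfile_add_mul_le {q : ℝ} (hr0 : 0 ≤ r) (hq : 2 ≤ q) (hqr : q * r = 1)
    (j : ℕ) :
    2 * radialProfile r (j + 1) j + (q - 1) * radialProfile r (j + 1) (j + 2)
      ≤ (q + 1) * radialProfile r (j + 1) (j + 1) := by
  have hstep : ∀ k, q * r ^ (k + 1) = r ^ k := fun k ↦ by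
    rw [pow_succ', ← mul_assoc, hqr, one_mul]
  rw [radialProfile, radialProfile, radialProfile, max_eq_right (by omega), max_eq_left (by omega),
    max_self, ← hstep j, ← hstep (j + 1)]
  nlinarith [mul_nonneg (pow_nonneg hr0 (j + 2)) (mul_nonneg (by linarith : 0 ≤ q)
    (sub_nonneg.2 hq))]

variable {V : Type*} [Fintype V] {G : SimpleGraph V} {d : ℕ}

lemma transP_mulVec_le (hd : d ≠ 0) (hreg : IsReg G d) {f : V → ℝ} {z : V} {c : ℝ}
    (hf : ∀ y, G.Adj z y → f y ≤ c) : (transP G d *ᵥ f) z ≤ c := by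
  have hrow := mem_rowStochastic_of_mem_doublyStochastic (transP_mem_doublyStochastic hd hreg)
  refine (mulVec_apply_le_of_forall_ne_zero hrow (g := fun _ ↦ c) fun y hy ↦ hf y ?_).trans_eq
    (congrFun (mulVec_const hrow c) z)
  by_contra hzy
  exact hy (if_neg hzy)

lemma mul_transP_mulVec_radial_le (hd : d ≠ 0) (hreg : IsReg G d) (hconn : G.Connected) (a z : V)
    {f : ℕ → ℝ} (hf : Antitone f) {t j : ℕ} (hj : G.dist a z = j + 1)
    (ht : parentCount G a z + siblingCount G a z ≤ t) :
    d * (transP G d *ᵥ fun y ↦ f (G.dist a y)) z ≤ t * f j + (d - t) * f (j + 2) := by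
  set near := (G.neighborFinset z).filter fun v ↦ G.dist a v ≤ G.dist a z
  set far := (G.neighborFinset z).filter fun v ↦ ¬G.dist a v ≤ G.dist a z
  have hcard : (near.card : ℝ) + far.card = d := by
    rw [← hreg.degree_eq z, ← G.card_neighborFinset_eq_degree]
    exact_mod_cast Finset.card_filter_add_card_filter_not _
  have hnear : ∑ y ∈ near, f (G.dist a y) ≤ near.card * f j := by
    rw [← nsmul_eq_mul]
    refine Finset.sum_le_card_nsmul _ _ _ fun y hy ↦ hf ?_
    have hzy := (G.mem_neighborFinset z y).1 (Finset.mem_filter.1 hy).1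
    have := hconn.dist_triangle (u := a) (v := y) (w := z)
    have := SimpleGraph.dist_eq_one_iff_adj.2 hzy.symm
    omega
  have hfar : ∑ y ∈ far, f (G.dist a y) ≤ far.card * f (j + 2) := by
    rw [← nsmul_eq_mul]
    refine Finset.sum_le_card_nsmul _ _ _ fun y hy ↦ hf ?_
    have := (Finset.mem_filter.1 hy).2
    omega
  have hnear_card : (near.card : ℝ) ≤ t := by
    rw [parentCount_add_siblingCount] at ht
    exact_mod_cast ht
  rw [transP_mulVec_apply, mul_inv_cancel_left₀ (by exact_mod_cast hd),
    ← Finset.sum_filter_add_sum_filter_not _ fun v ↦ G.dist a v ≤ G.dist a z]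
  calc _ ≤ near.card * f j + far.card * f (j + 2) := add_le_add hnear hfar
    _ = d * f (j + 2) + near.card * (f j - f (j + 2)) := by rw [← hcard]; ring
    _ ≤ d * f (j + 2) + t * (f j - f (j + 2)) := by
        gcongr
        exact sub_nonneg.2 (hf (by omega))
    _ = _ := by ring

lemma inv_sub_one_nonneg (hd : 1 ≤ d) : (0 : ℝ) ≤ ((d : ℝ) - 1)⁻¹ :=
  inv_nonneg.2 (sub_nonneg.2 (by exact_mod_cast hd))

lemma inv_sub_one_le_half (hd : 3 ≤ d) : ((d : ℝ) - 1)⁻¹ ≤ 1 / 2 := by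
  have hd' : (3 : ℝ) ≤ d := by exact_mod_cast hd
  rw [inv_le_comm₀ (by linarith) (by norm_num)]
  linarith

lemma transP_mulVec_radialProfile_le (hd : 3 ≤ d) (hreg : IsReg G d) (hconn : G.Connected)
    {a z : V} (hza : z ≠ a) {m : ℕ} (hz : parentCount G a z + siblingCount G a z ≤ 1 ∨
      parentCount G a z + siblingCount G a z ≤ 2 ∧ G.dist a z = m) :
    (transP G d *ᵥ fun y ↦ radialProfile ((d : ℝ) - 1)⁻¹ m (G.dist a y)) z
      ≤ radialProfile ((d : ℝ) - 1)⁻¹ m (G.dist a z) := by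
  have hd' : (3 : ℝ) ≤ d := by exact_mod_cast hd
  have hr0 := inv_sub_one_nonneg (d := d) (by omega)
  have hqr : ((d : ℝ) - 1) * ((d : ℝ) - 1)⁻¹ = 1 := mul_inv_cancel₀ (by linarith)
  have hanti := antitone_radialProfile hr0 ((inv_sub_one_le_half hd).trans one_half_lt_one.le) m
  obtain ⟨j, hj⟩ : ∃ j, G.dist a z = j + 1 :=
    Nat.exists_eq_add_one.2 (hconn.pos_dist_of_ne hza.symm)
  refine le_of_mul_le_mul_left ?_ (by linarith : (0 : ℝ) < d)
  rcases hz with hz | ⟨hz, rfl⟩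
  · have hle := mul_transP_mulVec_radial_le (by omega) hreg hconn a z hanti hj hz
    have hprofile := radialProfile_add_mul_le hr0 (by linarith) hqr m j
    rw [hj]
    push_cast at hle
    linarith
  · have hle := mul_transP_mulVec_radial_le (by omega) hreg hconn a z hanti hj hz
    have hprofile := two_mul_radialProfile_add_mul_le hr0 (by linarith) hqr j
    rw [hj] at hle ⊢
    push_cast at hle
    linarith

lemma exists_isBarrier (hd : 3 ≤ d) (hreg : IsReg G d) (hconn : G.Connected) {a : V} {R : ℕ}
    (hball : adjPairs G (gball G a R) ≤ 2 * (gball G a R).ncard) :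
    ∃ φ : V → ℝ, IsBarrier (transP G d) a (4 * ((d : ℝ) - 1)⁻¹ ^ R) φ ∧
      ∀ z, φ z ≤ 4 * ((d : ℝ) - 1)⁻¹ ^ G.dist a z := by
  obtain ⟨m, hm⟩ := exists_parentCount_add_siblingCount_le hconn hball
  set r := ((d : ℝ) - 1)⁻¹
  have hr0 : 0 ≤ r := inv_sub_one_nonneg (by omega)
  have hr : r ≤ 1 / 2 := inv_sub_one_le_half hd
  have hr1 : r ≤ 1 := hr.trans one_half_lt_one.le
  have herror : 0 ≤ 4 * r ^ R := by positivity
  refine ⟨fun z ↦ radialProfile r m (G.dist a z), ⟨fun z ↦ radialProfile_nonneg hr0 _ _,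
    fun z ↦ ?_⟩, fun z ↦ radialProfile_le hr0 hr1 _ _⟩
  rcases eq_or_ne z a with rfl | hza
  · have hle := transP_mulVec_le (by omega) hreg (f := fun y ↦ radialProfile r m (G.dist z y))
      (z := z) fun y hy ↦ (congrArg _ (SimpleGraph.dist_eq_one_iff_adj.2 hy)).le
    have hprofile := radialProfile_one_add_le hr0 hr m
    rw [Pi.single_eq_same, SimpleGraph.dist_self]
    linarith
  rw [Pi.single_eq_of_ne hza]
  rcases le_or_gt (G.dist a z) R with hzR | hzR
  · have hle := transP_mulVec_radialProfile_le hd hreg hconn hza (hm z hza hzR)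
    linarith
  · have hle : (transP G d *ᵥ fun y ↦ radialProfile r m (G.dist a y)) z ≤ radialProfile r m R :=
      transP_mulVec_le (by omega) hreg fun y hy ↦ antitone_radialProfile hr0 hr1 m <| by
        have := hconn.dist_triangle (u := a) (v := y) (w := z)
        have := SimpleGraph.dist_eq_one_iff_adj.2 hy.symm
        omega
    have hR := radialProfile_le hr0 hr1 m R
    have hz := radialProfile_nonneg hr0 m (G.dist a z)
    linarith

end RadialBarrier

section MixingError

variable {V : Type*} {G : SimpleGraph V} {d : ℕ} {A : Set V} {s : ℕ} {x z : V}

lemma Fset_disjoint (G : SimpleGraph V) (A : Set V) (s : ℕ) (x : V) :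
    Disjoint (Fset G A s x) A :=
  Set.disjoint_left.2 fun _ ⟨p, hp⟩ ↦ (hp _ p.end_mem_support).2

lemma notMem_sball_of_notMem_Fset {y : V} (hyA : y ∉ A) (hyF : y ∉ Fset G A s x)
    (hy : y = x ∨ ∃ z ∈ Fset G A s x, G.Adj z y) : y ∉ sball G A s := by
  intro hys
  rcases hy with rfl | ⟨z, ⟨p, hp⟩, hzy⟩
  · exact hyF ⟨SimpleGraph.Walk.nil, fun v hv ↦ by simp_all⟩
  · refine hyF ⟨p.concat hzy, fun v hv ↦ ?_⟩
    rw [SimpleGraph.Walk.support_concat, List.mem_append,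
      List.mem_singleton] at hv
    rcases hv with hv | rfl
    · exact hp v hv
    · exact ⟨hys, hyA⟩

variable [Fintype V] {β : ℝ} {h p : V → ℝ} {R : ℕ}

/-- Bound for `|E_y[H_A] - E_π[H_A]| / N` at vertices `y` at distance more than `s` from `A`, when
the balls of radius `R` contain at most one cycle. -/
noncomputable def mixingError (d : ℕ) (β : ℝ) (N R s : ℕ) : ℝ :=
  R / N + (8 * ((d : ℝ) - 1)⁻¹ ^ (s + 1) + 4 * R * ((d : ℝ) - 1)⁻¹ ^ R
    + Real.exp (-(β / 4) * R) / β)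

lemma mixingError_nonneg (hd : 1 ≤ d) (hβ : 0 ≤ β) (N R s : ℕ) : 0 ≤ mixingError d β N R s := by
  have := inv_sub_one_nonneg hd
  rw [mixingError]
  positivity

lemma IsMeanHittingTime.abs_sub_expect_le_mixingError (hd : 3 ≤ d) (hreg : IsReg G d)
    (hconn : G.Connected) (hgap : SpectralGapLB G d β) (hβ : 0 < β)
    (hball : ∀ a, adjPairs G (gball G a R) ≤ 2 * (gball G a R).ncard)
    (hh : IsMeanHittingTime (transP G d) A h) {y : V} (hy : y ∉ sball G A s) :
    |h y - 𝔼 z, h z| ≤ Fintype.card V * mixingError d β (Fintype.card V) R s := by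
  have hr0 := inv_sub_one_nonneg (d := d) (by omega)
  have hr1 := (inv_sub_one_le_half hd).trans one_half_lt_one.le
  have hN : (Fintype.card V : ℝ) ≠ 0 := by
    have : Nonempty V := ⟨y⟩
    exact_mod_cast Fintype.card_ne_zero
  choose φ hφ hφ_le using fun a ↦ exists_isBarrier hd hreg hconn (hball a)
  have hfar : ∀ a ∈ A, φ a y ≤ 4 * ((d : ℝ) - 1)⁻¹ ^ (s + 1) := fun a ha ↦
    (hφ_le a y).trans <| mul_le_mul_of_nonneg_left
      (pow_le_pow_of_le_one hr0 hr1 (not_le.1 fun hle ↦ hy ⟨a, ha, hle⟩)) zero_le_four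
  refine (hh.abs_sub_expect_le_of_isBarrier (transP_mem_doublyStochastic (by omega) hreg)
    (poincareInequality_transP (by omega) hreg hconn hgap) hβ (by positivity) (by positivity)
    hφ hfar R).trans_eq ?_
  rw [mixingError]
  field_simp
  ring

lemma IsMeanHittingTime.abs_div_expect_sub_le_mixingError (hd : 3 ≤ d) (hreg : IsReg G d)
    (hconn : G.Connected) (hgap : SpectralGapLB G d β) (hβ : 0 < β)
    (hball : ∀ a, adjPairs G (gball G a R) ≤ 2 * (gball G a R).ncard)
    (hA : A.Nonempty) (hcard : 2 * (A.ncard : ℝ) ≤ Fintype.card V)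
    (hF : adjPairs G (Fset G A s x) ≤ 2 * (Fset G A s x).ncard)
    (hh : IsMeanHittingTime (transP G d) A h)
    (hp : IsEscapeProbability (transP G d) A (Fset G A s x) p) :
    |h x / (𝔼 z, h z) - p x|
      ≤ 4 * A.ncard * (mixingError d β (Fintype.card V) R s + 4 / β / √(Fintype.card V)) := by
  have hN : (0 : ℝ) < Fintype.card V := by exact_mod_cast Fintype.card_pos_iff.2 ⟨x⟩
  have hfar : ∀ y ∉ A, y ∉ Fset G A s x → (y = x ∨ ∃ z ∈ Fset G A s x, transP G d z y ≠ 0) →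
      |h y - 𝔼 z, h z| ≤ Fintype.card V * mixingError d β (Fintype.card V) R s := by
    intro y hyA hyF hy
    refine hh.abs_sub_expect_le_mixingError hd hreg hconn hgap hβ hball
      (notMem_sball_of_notMem_Fset hyA hyF (hy.imp_right fun ⟨z, hz, hzy⟩ ↦ ⟨z, hz, ?_⟩))
    by_contra hadj
    exact hzy (if_neg hadj)
  have hdist := hh.abs_div_expect_sub_le (transP_mem_doublyStochastic (by omega) hreg)
    (poincareInequality_transP (by omega) hreg hconn hgap) hβ hp hA hcard (Fset_disjoint G A s x)
    (by exact_mod_cast hreg.four_mul_ncard_le hd hF)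
    (mul_nonneg hN.le (mixingError_nonneg (by omega) hβ.le _ _ _)) hfar
  refine hdist.trans_eq ?_
  calc _ = 4 * A.ncard * (mixingError d β (Fintype.card V) R s
        + 4 / β * (√(Fintype.card V) / Fintype.card V)) := by field_simp
    _ = _ := by rw [Real.sqrt_div_self', mul_one_div]

end MixingError

section Path

variable {V : Type*} {A F : Set V} {ω : ℕ → V}

/-- The trajectory `ω` seen from time one on. -/
def pathShift (ω : ℕ → V) : ℕ → V := fun i ↦ ω (i + 1)

lemma hitTime_eq_iInf (A : Set V) (ω : ℕ → V) :
    hitTime A ω = ⨅ k : ℕ, if ω k ∈ A then (k : ℕ∞) else ⊤ := by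
  simp only [hitTime, sInf_image, mem_ofPred_eq, iInf_eq_if]

lemma hitTime_of_mem (h : ω 0 ∈ A) : hitTime A ω = 0 :=
  le_zero_iff.1 (sInf_le ⟨0, h, rfl⟩)

lemma hitTime_of_notMem (h : ω 0 ∉ A) : hitTime A ω = 1 + hitTime A (pathShift ω) := by
  rw [hitTime_eq_iInf, hitTime_eq_iInf, ENat.add_iInf, ← inf_iInf_nat_succ, if_neg h, top_inf_eq]
  refine iInf_congr fun k ↦ ?_
  rw [pathShift, apply_ite (1 + ·), add_top, Nat.cast_succ, add_comm (k : ℕ∞)]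

lemma exitTime_lt_hitTime_iff_pathShift (hA : ω 0 ∉ A) (hF : ω 0 ∈ F) :
    exitTime F ω < hitTime A ω ↔
      exitTime F (pathShift ω) < hitTime A (pathShift ω) := by
  rw [exitTime, exitTime, hitTime_of_notMem hA, hitTime_of_notMem (notMem_compl_iff.2 hF)]
  exact ENat.add_lt_add_iff_left ENat.one_ne_top

section Measurable

variable [MeasurableSpace V]

lemma measurable_pathShift : Measurable (pathShift : (ℕ → V) → ℕ → V) :=
  measurable_pi_lambda _ fun i ↦ measurable_pi_apply (i + 1)

lemma measurable_toENNReal_hitTime (hA : MeasurableSet A) :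
    Measurable fun ω : ℕ → V ↦ (hitTime A ω : ℝ≥0∞) := by
  simp only [hitTime_eq_iInf, ENat.toENNReal_iInf, apply_ite ENat.toENNReal]
  exact Measurable.iInf fun k ↦
    Measurable.ite (measurable_pi_apply k hA) measurable_const measurable_const

lemma measurableSet_exitTime_lt_hitTime (hF : MeasurableSet F) (hA : MeasurableSet A) :
    MeasurableSet {ω : ℕ → V | exitTime F ω < hitTime A ω} := by
  simpa only [exitTime, ENat.toENNReal_lt] using measurableSet_lt
    (measurable_toENNReal_hitTime hF.compl) (measurable_toENNReal_hitTime hA)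

lemma ext_of_forall_path_prefix [Countable V] [MeasurableSingletonClass V] {μ ν : Measure (ℕ → V)}
    [IsFiniteMeasure μ]
    (h : ∀ (k : ℕ) (p : ℕ → V), μ {ω | ∀ i ≤ k, ω i = p i} = ν {ω | ∀ i ≤ k, ω i = p i}) :
    μ = ν := by
  refine IsProjectiveLimit.unique (P := fun I ↦ μ.map I.restrict) (fun I ↦ rfl) ?_
  rw [isProjectiveLimit_nat_iff]
  · intro k
    refine Measure.ext_of_singleton fun q ↦ ?_
    have hpre : (Preorder.frestrictLe k : (ℕ → V) → _) ⁻¹' {q}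
        = {ω | ∀ i ≤ k, ω i = q ⟨min i k, by simp⟩} := by
      ext ω
      simp only [mem_preimage, mem_singleton_iff, mem_ofPred_eq, funext_iff, Subtype.forall,
        Finset.mem_Iic, Preorder.frestrictLe_apply]
      exact forall₂_congr fun i hi ↦ by simp only [min_eq_left hi]
    rw [Measure.map_apply (by fun_prop) (measurableSet_singleton q),
      Measure.map_apply (by fun_prop) (measurableSet_singleton q)]
    change ν (Preorder.frestrictLe k ⁻¹' {q}) = μ (Preorder.frestrictLe k ⁻¹' {q})
    rw [hpre, h k fun i ↦ q ⟨min i k, by simp⟩]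
  · intro I J hJI
    rw [Measure.map_map (by fun_prop) (by fun_prop)]
    rfl

end Measurable

end Path

lemma toReal_toENNReal (n : ℕ∞) : (n : ℝ≥0∞).toReal = n.toNat := by
  cases n <;> simp

lemma lintegral_min_natCast_ne_top {Ω : Type*} [MeasurableSpace Ω] {μ : Measure Ω}
    [IsProbabilityMeasure μ] (f : Ω → ℝ≥0∞) (k : ℕ) : ∫⁻ ω, min (f ω) k ∂μ ≠ ∞ := by
  refine ((lintegral_mono fun _ ↦ min_le_right _ _).trans_lt ?_).ne
  rw [lintegral_const, measure_univ, mul_one]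
  exact ENNReal.natCast_lt_top k

section Walk

variable {V : Type*} [MeasurableSpace V] {G : SimpleGraph V} {d : ℕ} {W : V → Measure (ℕ → V)}

namespace IsSRW

lemma measure_start_eq (hW : IsSRW G d W) (x v : V) :
    W x {ω | ω 0 = v} = if v = x then 1 else 0 := by
  simpa using hW.2 x 0 fun _ ↦ v

/-- If `y` and `y'` were not separated, changing the starting point from `y` to `y'` would preserve
membership in measurable sets, so no null set could cover `{ω | ω 0 = y'}`. -/
lemma exists_measurableSet_separating (hW : IsSRW G d W) {y y' : V} (hne : y ≠ y') :
    ∃ s : Set V, MeasurableSet s ∧ y ∉ s ∧ y' ∈ s := by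
  by_contra! hsep
  obtain ⟨S, hsub, hS, hS0⟩ := exists_measurable_superset_of_null
    ((hW.measure_start_eq y y').trans (if_neg hne.symm))
  have hcover : {ω : ℕ → V | ω 0 = y} ⊆ S := by
    rintro ω rfl
    by_contra hω
    refine hsep _ (measurable_update ω (a := 0) hS) ?_ (hsub ?_)
    · simpa only [mem_preimage, Function.update_eq_self] using hω
    · exact Function.update_self (0 : ℕ) y' ω
  simpa [hW.measure_start_eq, hS0] using measure_mono (μ := W y) hcover

lemma measurableSingletonClass [Countable V] (hW : IsSRW G d W) : MeasurableSingletonClass V := by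
  choose! s hs using fun y : V ↦ fun y' ↦ hW.exists_measurableSet_separating (y := y) (y' := y')
  refine ⟨fun y ↦ MeasurableSet.compl_iff.1 ?_⟩
  have hcompl : ({y} : Set V)ᶜ = ⋃ y' ∈ {y' | y ≠ y'}, s y y' := by
    refine Subset.antisymm (fun z hz ↦ mem_biUnion (Ne.symm hz) (hs y z (Ne.symm hz)).2.2)
      (iUnion₂_subset fun y' hy' z hz ↦ ?_)
    rintro rfl
    exact (hs z y' hy').2.1 hz
  rw [hcompl]
  exact MeasurableSet.biUnion (to_countable _) fun y' hy' ↦ (hs y y' hy').1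

variable [MeasurableSingletonClass V]

lemma ae_start_eq (hW : IsSRW G d W) (x : V) : ∀ᵐ ω ∂W x, ω 0 = x := by
  have := hW.1 x
  have hmeas : MeasurableSet ((fun ω : ℕ → V ↦ ω 0) ⁻¹' {x}) :=
    measurable_pi_apply 0 (measurableSet_singleton x)
  exact (prob_compl_eq_zero_iff hmeas).2 ((hW.measure_start_eq x x).trans (if_pos rfl))

lemma ae_hitTime_eq_zero (hW : IsSRW G d W) {A : Set V} {z : V} (hz : z ∈ A) :
    ∀ᵐ ω ∂W z, hitTime A ω = 0 :=
  (hW.ae_start_eq z).mono fun _ hω ↦ hitTime_of_mem (hω ▸ hz)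

lemma ae_hitTime_eq_one_add (hW : IsSRW G d W) {A : Set V} {z : V} (hz : z ∉ A) :
    ∀ᵐ ω ∂W z, hitTime A ω = 1 + hitTime A (pathShift ω) :=
  (hW.ae_start_eq z).mono fun _ hω ↦ hitTime_of_notMem (hω ▸ hz)

lemma lintegral_hitTime_of_mem (hW : IsSRW G d W) {A : Set V} {z : V} (hz : z ∈ A) :
    ∫⁻ ω, hitTime A ω ∂W z = 0 :=
  lintegral_eq_zero_of_ae_eq_zero ((hW.ae_hitTime_eq_zero hz).mono fun ω hω ↦ by simp [hω])

lemma lintegral_hitTime_of_notMem (hW : IsSRW G d W) {A : Set V} {z : V} (hz : z ∉ A) :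
    ∫⁻ ω, hitTime A ω ∂W z = 1 + ∫⁻ ω, hitTime A (pathShift ω) ∂W z := by
  have := hW.1
  calc _ = ∫⁻ ω, (1 + hitTime A (pathShift ω)) ∂W z :=
        lintegral_congr_ae ((hW.ae_hitTime_eq_one_add hz).mono fun ω hω ↦ by simp [hω])
    _ = _ := by simp [lintegral_add_left]

lemma lintegral_min_hitTime_le_one_add (hW : IsSRW G d W) {A : Set V} {z : V} (hz : z ∉ A) (k : ℕ) :
    ∫⁻ ω, min (hitTime A ω : ℝ≥0∞) k ∂W z
      ≤ 1 + ∫⁻ ω, min (hitTime A (pathShift ω) : ℝ≥0∞) k ∂W z := by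
  have := hW.1
  calc _ ≤ ∫⁻ ω, (1 + min (hitTime A (pathShift ω) : ℝ≥0∞) k) ∂W z := by
        refine lintegral_mono_ae ((hW.ae_hitTime_eq_one_add hz).mono fun ω hω ↦ ?_)
        rw [hω, ENat.toENNReal_add, ENat.toENNReal_one, ← min_add_add_left]
        exact min_le_min le_rfl le_add_self
    _ = _ := by simp [lintegral_add_left]

variable [Fintype V]

lemma map_pathShift (hW : IsSRW G d W) (z : V) :
    (W z).map pathShift = ∑ y, srwStep G d z y • W y := by
  have := hW.1
  have : IsProbabilityMeasure ((W z).map pathShift) :=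
    Measure.isProbabilityMeasure_map measurable_pathShift.aemeasurable
  refine ext_of_forall_path_prefix fun k p ↦ ?_
  have hmeas : MeasurableSet {ω : ℕ → V | ∀ i ≤ k, ω i = p i} := by
    simp only [ofPred_forall]
    exact MeasurableSet.iInter fun i ↦ MeasurableSet.iInter fun _ ↦
      measurable_pi_apply i (measurableSet_singleton _)
  have hcons : W z (pathShift ⁻¹' {ω | ∀ i ≤ k, ω i = p i})
      = W z {ω | ∀ i ≤ k + 1, ω i = i.casesOn z p} := by
    refine measure_congr ?_
    filter_upwards [hW.ae_start_eq z] with ω hω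
    refine propext ⟨fun h i hi ↦ ?_, fun h i hi ↦ h (i + 1) (by lia)⟩
    cases i with
    | zero => exact hω
    | succ i => exact h i (by lia)
  rw [Measure.map_apply measurable_pathShift hmeas, hcons, hW.2, Finset.prod_range_succ',
    Measure.finsetSum_apply, Finset.sum_eq_single (p 0)]
  · simp [hW.2, mul_comm]
  · intro y _ hy
    simp [hW.2, hy.symm]
  · simp

lemma lintegral_comp_pathShift (hW : IsSRW G d W) {f : (ℕ → V) → ℝ≥0∞} (hf : Measurable f)
    (z : V) : ∫⁻ ω, f (pathShift ω) ∂W z = ∑ y, srwStep G d z y * ∫⁻ ω, f ω ∂W y := by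
  rw [← lintegral_map hf measurable_pathShift, hW.map_pathShift]
  simp

lemma toReal_lintegral_comp_pathShift (hd : d ≠ 0) (hW : IsSRW G d W) {f : (ℕ → V) → ℝ≥0∞}
    (hf : Measurable f) (hfin : ∀ y, ∫⁻ ω, f ω ∂W y ≠ ∞) (z : V) :
    (∫⁻ ω, f (pathShift ω) ∂W z).toReal
      = (transP G d *ᵥ fun y ↦ (∫⁻ ω, f ω ∂W y).toReal) z := by
  have hstep : ∀ y, srwStep G d z y ≠ ∞ := fun y ↦ by
    unfold srwStep
    split_ifs <;> simp [hd]
  rw [hW.lintegral_comp_pathShift hf,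
    ENNReal.toReal_sum fun y _ ↦ ENNReal.mul_ne_top (hstep y) (hfin y)]
  refine Finset.sum_congr rfl fun y _ ↦ ?_
  rw [ENNReal.toReal_mul, srwStep, apply_ite ENNReal.toReal, ENNReal.toReal_inv,
    ENNReal.toReal_natCast, ENNReal.toReal_zero]
  rfl

lemma isEscapeProbability (hd : d ≠ 0) (hW : IsSRW G d W) (A F : Set V) :
    IsEscapeProbability (transP G d) A F
      fun z ↦ (W z {ω | exitTime F ω < hitTime A ω}).toReal := by
  have := hW.1
  have hmeas := measurableSet_exitTime_lt_hitTime F.toFinite.measurableSet A.toFinite.measurableSet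
  refine ⟨fun z hz ↦ ?_, fun z hz hzF ↦ ?_, fun z hz hzF ↦ ?_⟩
  · suffices ∀ᵐ ω ∂W z, ω ∉ {ω | exitTime F ω < hitTime A ω} by
      simp only [measure_eq_zero_iff_ae_notMem.2 this, ENNReal.toReal_zero]
    filter_upwards [hW.ae_hitTime_eq_zero hz] with ω hω
    simp [hω]
  · suffices ∀ᵐ ω ∂W z, exitTime F ω < hitTime A ω by
      simp only [(prob_compl_eq_zero_iff hmeas).1 (ae_iff.1 this), ENNReal.toReal_one]
    filter_upwards [hW.ae_hitTime_eq_one_add hz,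
      hW.ae_hitTime_eq_zero (mem_compl hzF)] with ω hωA hωF
    simp [exitTime, hωA, hωF]
  · have hshift : W z {ω | exitTime F ω < hitTime A ω}
        = W z (pathShift ⁻¹' {ω | exitTime F ω < hitTime A ω}) := by
      refine measure_congr ?_
      filter_upwards [hW.ae_start_eq z] with ω hω
      exact propext (exitTime_lt_hitTime_iff_pathShift (hω ▸ hz) (hω ▸ hzF))
    have hone := hW.toReal_lintegral_comp_pathShift hd (measurable_one.indicator hmeas)
      (fun y ↦ by rw [lintegral_indicator_one hmeas]; exact measure_ne_top _ _) z
    simp only [lintegral_indicator_one hmeas] at hone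
    rw [hshift, ← hone, ← lintegral_indicator_one (measurable_pathShift hmeas)]
    rfl

/-- Truncation keeps the expectations finite, and bounds them uniformly in `k`, because the function
`z ↦ E_z[min (H_A) k]` has Laplacian at most `1` off `A`. -/
lemma toReal_lintegral_min_hitTime_le (hd : d ≠ 0) (hW : IsSRW G d W) (hreg : IsReg G d)
    {β : ℝ} (hgap : PoincareInequality (transP G d) β) (hβ : 0 < β) {A : Set V} (hA : A.Nonempty)
    (k : ℕ) (z : V) :
    (∫⁻ ω, min (hitTime A ω : ℝ≥0∞) k ∂W z).toReal ≤ √(Fintype.card V) * Fintype.card V / β := by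
  have := hW.1
  have hmeas : Measurable fun ω : ℕ → V ↦ min (hitTime A ω : ℝ≥0∞) k :=
    (measurable_toENNReal_hitTime A.toFinite.measurableSet).min measurable_const
  set u : V → ℝ := fun z ↦ (∫⁻ ω, min (hitTime A ω : ℝ≥0∞) k ∂W z).toReal
  have hu_mem : ∀ z ∈ A, u z = 0 := fun z hz ↦ by
    have hle : ∫⁻ ω, min (hitTime A ω : ℝ≥0∞) k ∂W z ≤ 0 :=
      (lintegral_mono fun _ ↦ min_le_left _ _).trans_eq (hW.lintegral_hitTime_of_mem hz)
    simp only [u, nonpos_iff_eq_zero.1 hle, ENNReal.toReal_zero]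
  have hu_notMem : ∀ z ∉ A, u z - (transP G d *ᵥ u) z ≤ 1 := fun z hz ↦ by
    have hshift : ∫⁻ ω, min (hitTime A (pathShift ω) : ℝ≥0∞) k ∂W z ≠ ∞ :=
      lintegral_min_natCast_ne_top _ k
    have hreal := ENNReal.toReal_mono (by simp [hshift])
      (hW.lintegral_min_hitTime_le_one_add hz k)
    rw [ENNReal.toReal_add ENNReal.one_ne_top hshift, ENNReal.toReal_one,
      hW.toReal_lintegral_comp_pathShift hd hmeas fun _ ↦ lintegral_min_natCast_ne_top _ k] at hreal
    linarith
  have hN : (0 : ℝ) < Fintype.card V := by exact_mod_cast Fintype.card_pos_iff.2 ⟨z⟩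
  have hncard : (Aᶜ.ncard : ℝ) ≤ (1 - (Fintype.card V : ℝ)⁻¹) * Fintype.card V := by
    rw [sub_mul, inv_mul_cancel₀ hN.ne', one_mul, le_sub_iff_add_le]
    have hcompl := ncard_add_ncard_compl A
    have hpos := hA.ncard_pos
    rw [Nat.card_eq_fintype_card] at hcompl
    exact_mod_cast (by lia : Aᶜ.ncard + 1 ≤ Fintype.card V)
  refine (hgap.apply_le_of_sub_mulVec_le_one (transP_mem_doublyStochastic hd hreg) hβ
    (sub_lt_self 1 (inv_pos.2 hN)) hncard (fun _ ↦ ENNReal.toReal_nonneg)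
    (fun z hz ↦ hu_mem z (notMem_compl_iff.1 hz)) (fun z hz ↦ hu_notMem z fun hzA ↦
      hz.ne' (hu_mem z hzA)) z).trans_eq ?_
  rw [sub_sub_cancel, ← div_eq_mul_inv, div_div_eq_mul_div]

lemma lintegral_hitTime_ne_top (hd : d ≠ 0) (hW : IsSRW G d W) (hreg : IsReg G d)
    {β : ℝ} (hgap : PoincareInequality (transP G d) β) (hβ : 0 < β) {A : Set V} (hA : A.Nonempty)
    (z : V) : ∫⁻ ω, hitTime A ω ∂W z ≠ ∞ := by
  have := hW.1
  have hmeas := measurable_toENNReal_hitTime A.toFinite.measurableSet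
  have hsup : ∀ ω : ℕ → V, (hitTime A ω : ℝ≥0∞) = ⨆ k : ℕ, min (hitTime A ω : ℝ≥0∞) k := fun ω ↦ by
    simp [← inf_iSup_eq, ENNReal.iSup_natCast]
  rw [lintegral_congr hsup, lintegral_iSup (fun k ↦ hmeas.min measurable_const)
    fun k l hkl ω ↦ by dsimp only; gcongr]
  refine ne_top_of_le_ne_top
    (ENNReal.ofReal_ne_top (r := √(Fintype.card V) * Fintype.card V / β)) (iSup_le fun k ↦ ?_)
  exact (ENNReal.le_ofReal_iff_toReal_le (lintegral_min_natCast_ne_top _ k) (by positivity)).2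
    (hW.toReal_lintegral_min_hitTime_le hd hreg hgap hβ hA k z)

lemma isMeanHittingTime (hd : d ≠ 0) (hW : IsSRW G d W) (hreg : IsReg G d)
    {β : ℝ} (hgap : PoincareInequality (transP G d) β) (hβ : 0 < β) {A : Set V} (hA : A.Nonempty) :
    IsMeanHittingTime (transP G d) A fun z ↦ ∫ ω, ((hitTime A ω).toNat : ℝ) ∂W z := by
  have := hW.1
  have hfin := hW.lintegral_hitTime_ne_top hd hreg hgap hβ hA
  have hmeas := measurable_toENNReal_hitTime A.toFinite.measurableSet
  have hreal : ∀ z, ∫ ω, ((hitTime A ω).toNat : ℝ) ∂W z = (∫⁻ ω, hitTime A ω ∂W z).toReal := by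
    intro z
    simp only [← integral_toReal hmeas.aemeasurable (ae_lt_top hmeas (hfin z)), toReal_toENNReal]
  simp only [hreal]
  refine ⟨fun z ↦ ENNReal.toReal_nonneg, fun z hz ↦ ?_, fun z hz ↦ ?_⟩
  · rw [hW.lintegral_hitTime_of_mem hz, ENNReal.toReal_zero]
  · have hstep := hW.lintegral_hitTime_of_notMem hz
    have hshift : ∫⁻ ω, hitTime A (pathShift ω) ∂W z ≠ ∞ :=
      ne_top_of_le_ne_top (hfin z) (le_add_self.trans_eq hstep.symm)
    rw [hstep, ENNReal.toReal_add ENNReal.one_ne_top hshift, ENNReal.toReal_one,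
      hW.toReal_lintegral_comp_pathShift hd hmeas hfin]

end IsSRW

end Walk

section Asymptotics

open Asymptotics

variable {d : ℕ} {δ κ θ α β : ℝ}

lemma isBigO_rpow_neg_log_pow (hδ : 0 < δ) (m : ℕ) :
    (fun N : ℕ ↦ (N : ℝ) ^ (-δ)) =O[atTop] fun N : ℕ ↦ (Real.log N ^ m)⁻¹ := by
  have hlog : (fun t : ℝ ↦ Real.log t ^ m) =o[atTop] fun t ↦ t ^ δ := by
    simpa using isLittleO_log_rpow_rpow_atTop (m : ℝ) hδ
  refine ((hlog.comp_tendsto tendsto_natCast_atTop_atTop).isBigO.inv_rev ?_).congr_left fun N ↦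
    (Real.rpow_neg N.cast_nonneg δ).symm
  filter_upwards [eventually_gt_atTop 1] with N hN hzero
  exact absurd hzero (pow_pos (Real.log_pos (Nat.one_lt_cast.2 hN)) m).ne'

lemma isBigO_floor_mul_log (hκ : 0 ≤ κ) :
    (fun N : ℕ ↦ (⌊κ * Real.log N⌋₊ : ℝ)) =O[atTop] fun N : ℕ ↦ Real.log N := by
  refine IsBigO.of_bound κ (Eventually.of_forall fun N ↦ ?_)
  have hlog := Real.log_natCast_nonneg N
  rw [Real.norm_of_nonneg (Nat.cast_nonneg _), Real.norm_of_nonneg hlog]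
  exact Nat.floor_le (by positivity)

lemma isBigO_exp_neg_mul_floor_mul_log (hθ : 0 < θ) (hκ : 0 < κ) (m : ℕ) :
    (fun N : ℕ ↦ Real.exp (-θ * ⌊κ * Real.log N⌋₊)) =O[atTop] fun N : ℕ ↦ (Real.log N ^ m)⁻¹ := by
  refine IsBigO.trans (IsBigO.of_bound (Real.exp θ) ?_) (isBigO_rpow_neg_log_pow (mul_pos hθ hκ) m)
  filter_upwards [eventually_gt_atTop 0] with N hN
  rw [Real.norm_of_nonneg (Real.exp_nonneg _), Real.norm_of_nonneg (by positivity),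
    Real.rpow_def_of_pos (Nat.cast_pos.2 hN), ← Real.exp_add, Real.exp_le_exp]
  linarith [mul_lt_mul_of_pos_left (Nat.lt_floor_add_one (κ * Real.log N)) hθ]

lemma isBigO_floor_mul_exp_neg_mul_floor (hθ : 0 < θ) (hκ : 0 < κ) :
    (fun N : ℕ ↦ (⌊κ * Real.log N⌋₊ : ℝ) * Real.exp (-θ * ⌊κ * Real.log N⌋₊))
      =O[atTop] fun N : ℕ ↦ (Real.log N ^ 4)⁻¹ := by
  refine ((isBigO_floor_mul_log hκ.le).mul
    (isBigO_exp_neg_mul_floor_mul_log hθ hκ 5)).congr' .rfl ?_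
  filter_upwards [eventually_gt_atTop 1] with N hN
  have hlog := Real.log_pos (Nat.one_lt_cast.2 hN)
  field_simp

lemma isBigO_floor_mul_log_div (hκ : 0 ≤ κ) :
    (fun N : ℕ ↦ (⌊κ * Real.log N⌋₊ : ℝ) / N) =O[atTop] fun N : ℕ ↦ (Real.log N ^ 4)⁻¹ := by
  have hN : (fun N : ℕ ↦ (N : ℝ)⁻¹) =O[atTop] fun N : ℕ ↦ (Real.log N ^ 5)⁻¹ := by
    simpa only [Real.rpow_neg_one] using isBigO_rpow_neg_log_pow one_pos 5
  refine ((isBigO_floor_mul_log hκ).mul hN).congr' (.of_forall fun N ↦ rfl) ?_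
  filter_upwards [eventually_gt_atTop 1] with N hN
  have hlog := Real.log_pos (Nat.one_lt_cast.2 hN)
  field_simp

lemma isBigO_inv_sqrt :
    (fun N : ℕ ↦ (√(N : ℝ))⁻¹) =O[atTop] fun N : ℕ ↦ (Real.log N ^ 4)⁻¹ := by
  refine (isBigO_rpow_neg_log_pow one_half_pos 4).congr_left fun N ↦ ?_
  rw [Real.rpow_neg N.cast_nonneg, Real.sqrt_eq_rpow]

lemma logb_pow_eight_le_pow_sn (hd : 3 ≤ d) {N : ℕ} (hN : (d : ℝ) - 1 ≤ N) :
    Real.logb ((d : ℝ) - 1) N ^ 8 ≤ ((d : ℝ) - 1) ^ (sn d N + 1) := by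
  have hq : (1 : ℝ) < d - 1 := lt_sub_iff_add_lt.2 (by exact_mod_cast (by lia : 1 + 1 < d))
  have hL : 0 < Real.logb ((d : ℝ) - 1) N := Real.logb_pos hq (hq.trans_le hN)
  have hsn : 8 * Real.logb (d - 1) (Real.logb (d - 1) N) ≤ (sn d N + 1 : ℕ) := by
    rw [Nat.cast_add_one]
    exact (Nat.lt_floor_add_one _).le.trans (by gcongr; exact le_max_right _ _)
  calc Real.logb (d - 1) N ^ 8
      = ((d : ℝ) - 1) ^ (8 * Real.logb (d - 1) (Real.logb (d - 1) N)) := by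
        rw [mul_comm, Real.rpow_mul (by linarith), Real.rpow_logb (by linarith) hq.ne' hL]
        norm_cast
    _ ≤ ((d : ℝ) - 1) ^ (sn d N + 1) := by
        rw [← Real.rpow_natCast]
        exact Real.rpow_le_rpow_of_exponent_le hq.le hsn

lemma isBigO_inv_pow_sn (hd : 3 ≤ d) :
    (fun N : ℕ ↦ ((d : ℝ) - 1)⁻¹ ^ (sn d N + 1)) =O[atTop] fun N : ℕ ↦ (Real.log N ^ 4)⁻¹ := by
  have hq : (1 : ℝ) < d - 1 := lt_sub_iff_add_lt.2 (by exact_mod_cast (by lia : 1 + 1 < d))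
  have hlogq := Real.log_pos hq
  refine IsBigO.of_bound (Real.log (d - 1) ^ 4) ?_
  filter_upwards [(tendsto_natCast_atTop_atTop (R := ℝ)).eventually_ge_atTop (d - 1)] with N hN
  have hL : 1 ≤ Real.logb (d - 1) N :=
    (Real.le_logb_iff_rpow_le hq (by linarith)).2 (by simpa using hN)
  have hlog : Real.log N = Real.logb (d - 1) N * Real.log (d - 1) :=
    (div_mul_cancel₀ _ hlogq.ne').symm
  rw [inv_pow, Real.norm_of_nonneg (by positivity), Real.norm_of_nonneg (by positivity), hlog,
    mul_pow, mul_inv, mul_comm, mul_assoc, inv_mul_cancel₀ (by positivity), mul_one]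
  gcongr
  exact (pow_le_pow_right₀ hL (by norm_num)).trans (logb_pow_eight_le_pow_sn hd hN)

lemma isBigO_mixingError (hd : 3 ≤ d) (hα : 0 < α) (hβ : 0 < β) :
    (fun N : ℕ ↦ mixingError d β N ⌊α * Real.logb (d - 1) N⌋₊ (sn d N) + 4 / β / √(N : ℝ))
      =O[atTop] fun N : ℕ ↦ (Real.log N ^ 4)⁻¹ := by
  have hq : (1 : ℝ) < d - 1 := lt_sub_iff_add_lt.2 (by exact_mod_cast (by lia : 1 + 1 < d))
  have hlogq := Real.log_pos hq
  have hκ : 0 < α / Real.log (d - 1) := div_pos hα hlogq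
  have hfloor (N : ℕ) : α * Real.logb (d - 1) N = α / Real.log (d - 1) * Real.log N := by
    rw [Real.logb, mul_div_assoc', div_mul_eq_mul_div]
  have hpow (R : ℕ) : ((d : ℝ) - 1)⁻¹ ^ R = Real.exp (-Real.log (d - 1) * R) := by
    rw [mul_comm, Real.exp_nat_mul, Real.exp_neg, Real.exp_log (by linarith)]
  simp only [mixingError, hfloor]
  refine (((isBigO_floor_mul_log_div hκ.le).add ((((isBigO_inv_pow_sn hd).const_mul_left 8).add
    ((isBigO_floor_mul_exp_neg_mul_floor hlogq hκ).const_mul_left 4)).add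
    ((isBigO_exp_neg_mul_floor_mul_log (div_pos hβ four_pos) hκ 4).const_mul_left β⁻¹))).add
    (isBigO_inv_sqrt.const_mul_left (4 / β))).congr_left fun N ↦ ?_
  rw [hpow ⌊_⌋₊]
  ring

lemma exists_forall_mul_log_le_or {e : ℕ → ℝ} {b : ℝ} (hb : 0 < b)
    (he : e =O[atTop] fun N : ℕ ↦ (Real.log N ^ 4)⁻¹) :
    ∃ c : ℝ, 0 < c ∧ ∀ N : ℕ, 1 < N →
      2 * (b * Real.log N) ≤ N ∧ 4 * (b * Real.log N) * e N ≤ c / Real.log N ^ 3 ∨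
        (N : ℝ) ≤ c / Real.log N ^ 3 := by
  obtain ⟨C, hC, heC⟩ := he.exists_pos
  have hlog : ∀ᶠ N : ℕ in atTop, 2 * (b * Real.log N) ≤ N := by
    have h := (Real.isLittleO_log_id_atTop.comp_tendsto
      (tendsto_natCast_atTop_atTop (R := ℝ))).const_mul_left (2 * b)
    filter_upwards [h.bound one_pos] with N hN
    simpa [mul_assoc] using (le_abs_self _).trans hN
  obtain ⟨N₀, hN₀⟩ := eventually_atTop.1 (hlog.and heC.bound)
  refine ⟨4 * b * C + (N₀ : ℝ) ^ 4, by positivity, fun N hN ↦ ?_⟩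
  have hlogN := Real.log_pos (Nat.one_lt_cast.2 hN)
  rcases le_or_gt N₀ N with hle | hlt
  · obtain ⟨hlarge, heN⟩ := hN₀ N hle
    rw [Real.norm_of_nonneg (by positivity : (0 : ℝ) ≤ (Real.log N ^ 4)⁻¹)] at heN
    refine .inl ⟨hlarge, ?_⟩
    calc 4 * (b * Real.log N) * e N
        ≤ 4 * (b * Real.log N) * (C * (Real.log N ^ 4)⁻¹) := by
          gcongr
          exact (le_abs_self _).trans heN
      _ = 4 * b * C / Real.log N ^ 3 := by field_simp
      _ ≤ (4 * b * C + (N₀ : ℝ) ^ 4) / Real.log N ^ 3 := by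
          gcongr
          exact le_add_of_nonneg_right (by positivity)
  · refine .inr ((le_div_iff₀ (pow_pos hlogN 3)).2 ?_)
    calc N * Real.log N ^ 3 ≤ (N₀ : ℝ) * (N₀ : ℝ) ^ 3 := by
          gcongr
          exact (Real.log_le_self N.cast_nonneg).trans (by exact_mod_cast hlt.le)
      _ ≤ 4 * b * C + (N₀ : ℝ) ^ 4 := by
          rw [← pow_succ']
          exact le_add_of_nonneg_left (by positivity)

end Asymptotics

lemma abs_div_expect_sub_le_card {V : Type*} [Fintype V] {h : V → ℝ} (hh : 0 ≤ h) (x : V) {p : ℝ}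
    (hp0 : 0 ≤ p) (hp1 : p ≤ 1) : |h x / (𝔼 z, h z) - p| ≤ Fintype.card V := by
  have hN : (1 : ℝ) ≤ Fintype.card V := by exact_mod_cast Fintype.card_pos_iff.2 ⟨x⟩
  have hratio : h x / (𝔼 z, h z) ≤ Fintype.card V := by
    refine div_le_of_le_mul₀ (Finset.expect_nonneg fun z _ ↦ hh z) (by positivity) ?_
    rw [Finset.card_univ.symm, Finset.card_mul_expect]
    exact Finset.single_le_sum (fun z _ ↦ hh z) (Finset.mem_univ x)
  exact abs_sub_le_of_nonneg_of_le (div_nonneg (hh x) (Finset.expect_nonneg fun z _ ↦ hh z)) hratio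
    hp0 (hp1.trans hN)

end GFF

open GFF in
theorem good_vertex_hitting_time_ratio_general {d : ℕ} (hd : 3 ≤ d) {α β b : ℝ} (hα : 0 < α)
    (hβ : 0 < β) (hb : 0 < b) :
    ∃ c : ℝ, 0 < c ∧ ∀ (V : Type*) [Fintype V] [MeasurableSpace V] (G : SimpleGraph V),
      G.Connected → IsReg G d →
      (∀ x, adjPairs G (gball G x ⌊α * Real.logb ((d : ℝ) - 1) (Fintype.card V)⌋₊) ≤
        2 * (gball G x ⌊α * Real.logb ((d : ℝ) - 1) (Fintype.card V)⌋₊).ncard) →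
      SpectralGapLB G d β →
      ∀ W, IsSRW G d W → ∀ (A : Set V) (x : V), A.Nonempty →
        (A.ncard : ℝ) ≤ b * Real.log (Fintype.card V) →
        adjPairs G (Fset G A (sn d (Fintype.card V)) x) ≤
          2 * (Fset G A (sn d (Fintype.card V)) x).ncard →
        |(∫ ω, ((hitTime A ω).toNat : ℝ) ∂W x) / (𝔼 z, ∫ ω, ((hitTime A ω).toNat : ℝ) ∂W z) -
            (W x {ω | exitTime (Fset G A (sn d (Fintype.card V)) x) ω < hitTime A ω}).toReal| ≤
          c / Real.log (Fintype.card V) ^ 3 := by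
  obtain ⟨c, hc, hbound⟩ := exists_forall_mul_log_le_or hb (isBigO_mixingError hd hα hβ)
  refine ⟨c, hc, fun V _ _ G hconn hreg hball hgap W hW A x hA hcard hF ↦ ?_⟩
  have hd0 : d ≠ 0 := by lia
  have := hW.measurableSingletonClass
  have := hW.1 x
  have hh := hW.isMeanHittingTime hd0 hreg (poincareInequality_transP hd0 hreg hconn hgap) hβ hA
  have hp := hW.isEscapeProbability hd0 A (Fset G A (sn d (Fintype.card V)) x)
  have hN : 1 < Fintype.card V := by
    have := G.degree_lt_card_verts x
    rw [hreg.degree_eq] at this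
    lia
  rcases hbound _ hN with ⟨hlarge, herror⟩ | hsmall
  · refine (hh.abs_div_expect_sub_le_mixingError hd hreg hconn hgap hβ hball hA
      ((mul_le_mul_of_nonneg_left hcard zero_le_two).trans hlarge) hF hp).trans (le_trans ?_ herror)
    gcongr
    exact add_nonneg (mixingError_nonneg (by lia) hβ.le _ _ _) (by positivity)
  · exact (abs_div_expect_sub_le_card hh.nonneg x measureReal_nonneg measureReal_le_one).trans
      hsmall

/-- comparison of the normalized expected hitting time with the escape
probability at a good vertex. -/
theorem good_vertex_hitting_time_ratio
    (d : ℕ) (hd : 3 ≤ d)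
    (V : ℕ → Type) [∀ n, Fintype (V n)] [∀ n, MeasurableSpace (V n)]
    (G : ∀ n, SimpleGraph (V n)) (N : ℕ → ℕ) (α β : ℝ)
    (hα : 0 < α ∧ α ≤ 1) (hβ : 0 < β ∧ β ≤ 2)
    (hNmono : StrictMono N) (hNpos : ∀ n, 1 ≤ N n)
    (hcard : ∀ n, Nat.card (V n) = N n)
    (hconn : ∀ n, (G n).Connected)
    (hreg : ∀ n, GFF.IsReg (G n) d)
    (hcyc : ∀ n (x : V n),
      GFF.adjPairs (G n) (GFF.gball (G n) x ⌊α * Real.logb ((d : ℝ) - 1) (N n : ℝ)⌋₊) ≤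
        2 * (GFF.gball (G n) x ⌊α * Real.logb ((d : ℝ) - 1) (N n : ℝ)⌋₊).ncard)
    (hgap : ∀ n, GFF.SpectralGapLB (G n) d β)
    (W : ∀ n, V n → Measure (ℕ → V n))
    (hW : ∀ n, GFF.IsSRW (G n) d (W n))
    (b : ℝ) (hb : 0 < b) :
    ∃ c : ℝ, 0 < c ∧
      ∀ (n : ℕ) (A : Set (V n)) (x : V n),
        A.Nonempty → (A.ncard : ℝ) ≤ b * Real.log (N n) →
        GFF.GoodVertex (G n) A (GFF.sn d (N n)) x →
        |(∫ p, ((GFF.hitTime A p).toNat : ℝ) ∂ W n x) /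
              ((N n : ℝ)⁻¹ * ∑ z : V n, ∫ p, ((GFF.hitTime A p).toNat : ℝ) ∂ W n z) -
            (W n x {ω | GFF.exitTime (GFF.Fset (G n) A (GFF.sn d (N n)) x) ω <
              GFF.hitTime A ω}).toReal| ≤
          c / Real.log (N n) ^ 3 := by
  simp only [Nat.card_eq_fintype_card] at hcard
  obtain ⟨c, hc, hbound⟩ := good_vertex_hitting_time_ratio_general hd hα.1 hβ.1 hb
  refine ⟨c, hc, fun n A x hA hAcard hx ↦ ?_⟩
  have hratio := hbound (V n) (G n) (hconn n) (hreg n) (by simpa only [hcard] using hcyc n) (hgap n)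
    (W n) (hW n) A x hA (by rwa [hcard])
    (by rw [hcard, hx.2.2.1]; exact Nat.mul_le_mul_left 2 (Nat.sub_le _ _))
  rwa [Fintype.expect_eq_sum_div_card, hcard, div_eq_inv_mul (∑ _, _)] at hratio
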